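/- arXiv:2001.00654 — 3 statements merged into one kernel-verified Lean document; each statement's English description precedes it below -/
import Mathlib

section
/- Let n ≥ 1 and let (B_m(t))_{m ≥ 0} be the family of polynomials in ℚ[t] determined by the formal power series identities B_m(t) = (1−t)^{m+1} · Σ_{k ≥ 0} (2k+1)^m t^k for every m ≥ 0. Then the following identity of polynomials in ℚ[t] holds: n! (1+t)² · Σ_{π ∈ 𝔦_n} 2^{udr(π)} t^{udr(π)} (1+t²)^{n−udr(π)} = 2 Σ_{k=1}^{n} c_{n,k} 2^k A_k(t²) (1−t²)^{n−k} + 2t Σ_{k=0}^{n} d_{n,k} B_k(t²) (1−t²)^{n−k}, where c_{n,k} is the number of permutations π of [n] such that no cycle of π has length divisible by 4 and π² has exactly k cycles (counting fixed points), and d_{n,k} is the number of permutations π of [n] such that π² has exactly k odd cycles (cycles of odd length, counting fixed points). (This is the stated formula for I_n^{udr}(2t/(1+t²)), where I_n^{udr}(t) = Σ_{π ∈ 𝔦_n} t^{udr(π)}, with denominators cleared; note udr(π) ≤ n for every π ∈ S_n.) -/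
open scoped Classical

noncomputable section

def oneLine (n : ℕ) (π : Equiv.Perm (Fin n)) (i : ℕ) : ℕ :=
  if h : 1 ≤ i ∧ i ≤ n then (π ⟨i - 1, by omega⟩).val + 1 else 0

def des (n : ℕ) (π : Equiv.Perm (Fin n)) : ℕ :=
  ((Finset.Icc 1 (n - 1)).filter fun i => oneLine n π (i + 1) < oneLine n π i).card

def pk (n : ℕ) (π : Equiv.Perm (Fin n)) : ℕ :=
  ((Finset.Icc 2 (n - 1)).filter fun i =>
    oneLine n π (i - 1) < oneLine n π i ∧ oneLine n π (i + 1) < oneLine n π i).card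

def lpk (n : ℕ) (π : Equiv.Perm (Fin n)) : ℕ :=
  ((Finset.Icc 1 (n - 1)).filter fun i =>
    oneLine n π (i - 1) < oneLine n π i ∧ oneLine n π (i + 1) < oneLine n π i).card

def pval (n : ℕ) (π : Equiv.Perm (Fin n)) : ℕ :=
  ((Finset.Icc 2 (n - 1)).filter fun i =>
    oneLine n π i < oneLine n π (i - 1) ∧ oneLine n π i < oneLine n π (i + 1)).card

def udr (n : ℕ) (π : Equiv.Perm (Fin n)) : ℕ := lpk n π + pval n π + 1

def fullCycleType (n : ℕ) (π : Equiv.Perm (Fin n)) : Multiset ℕ :=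
  π.cycleType + Multiset.replicate (n - π.support.card) 1

def numCycles (n : ℕ) (π : Equiv.Perm (Fin n)) : ℕ := Multiset.card (fullCycleType n π)

def numOddCycles (n : ℕ) (π : Equiv.Perm (Fin n)) : ℕ :=
  Multiset.card ((fullCycleType n π).filter fun p => p % 2 = 1)

def IsCyclicPerm (n : ℕ) (π : Equiv.Perm (Fin n)) : Prop :=
  fullCycleType n π = {n}

def cyclicSet (n : ℕ) : Finset (Equiv.Perm (Fin n)) :=
  Finset.univ.filter fun π => IsCyclicPerm n π

def invSet (n : ℕ) : Finset (Equiv.Perm (Fin n)) :=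
  Finset.univ.filter fun π => π ^ 2 = 1

def eulerianA (m : ℕ) : Polynomial ℚ :=
  ∑ π : Equiv.Perm (Fin m), Polynomial.X ^ (des m π + 1)

def peakP (m : ℕ) : Polynomial ℚ :=
  ∑ π : Equiv.Perm (Fin m), Polynomial.X ^ (pk m π + 1)

def leftPeakP (m : ℕ) : Polynomial ℚ :=
  ∑ π : Equiv.Perm (Fin m), Polynomial.X ^ (lpk m π)

def cnk (n k : ℕ) : ℕ :=
  (Finset.univ.filter fun π : Equiv.Perm (Fin n) =>
    (∀ p ∈ fullCycleType n π, ¬ (4 ∣ p)) ∧ numCycles n (π ^ 2) = k).card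

def bnk (n k : ℕ) : ℕ :=
  (Finset.univ.filter fun π : Equiv.Perm (Fin n) => numCycles n (π ^ 2) = k).card

def dnk (n k : ℕ) : ℕ :=
  (Finset.univ.filter fun π : Equiv.Perm (Fin n) => numOddCycles n (π ^ 2) = k).card

def zmu (s : Multiset ℕ) : ℕ := s.prod * ∏ j ∈ s.toFinset, (s.count j).factorial

lemma zmu_cons (k : ℕ) (s : Multiset ℕ) : zmu (k ::ₘ s) = k * (s.count k + 1) * zmu s := by
  unfold zmu
  have h2 : ∏ j ∈ s.toFinset, (s.count j).factorial
      = ∏ j ∈ insert k s.toFinset, (s.count j).factorial := by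
    apply Finset.prod_subset (Finset.subset_insert _ _)
    intro x _ hx
    rw [Multiset.count_eq_zero_of_notMem (by simpa using hx)]; rfl
  rw [h2, Multiset.toFinset_cons, Multiset.prod_cons,
    ← Finset.mul_prod_erase (insert k s.toFinset) _ (Finset.mem_insert_self k _),
    ← Finset.mul_prod_erase (insert k s.toFinset) (fun j => (s.count j).factorial)
      (Finset.mem_insert_self k _)]
  have : ∏ x ∈ (insert k s.toFinset).erase k, ((k ::ₘ s).count x).factorial
      = ∏ x ∈ (insert k s.toFinset).erase k, (s.count x).factorial := by
    apply Finset.prod_congr rfl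
    intro x hx
    rw [Multiset.count_cons_of_ne (Finset.ne_of_mem_erase hx)]
  rw [this, Multiset.count_cons_self, Nat.factorial_succ]
  ring

lemma zmu_pos (s : Multiset ℕ) (h : ∀ a ∈ s, 0 < a) : 0 < zmu s := by
  unfold zmu
  have : 0 < s.prod := Multiset.prod_pos h
  positivity

lemma fct_sum (n : ℕ) (σ : Equiv.Perm (Fin n)) : (fullCycleType n σ).sum = n := by
  have := σ.support.card_le_univ
  simp [fullCycleType, Equiv.Perm.sum_cycleType] at *
  omega

lemma fct_pos (n : ℕ) (σ : Equiv.Perm (Fin n)) : ∀ a ∈ fullCycleType n σ, 0 < a := by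
  intro a ha
  rcases Multiset.mem_add.1 ha with h | h
  · exact zero_lt_two.trans_le (Equiv.Perm.two_le_of_mem_cycleType h)
  · rw [Multiset.eq_of_mem_replicate h]; exact one_pos

def fctPart (n : ℕ) (σ : Equiv.Perm (Fin n)) : n.Partition where
  parts := fullCycleType n σ
  parts_pos := fun {a} ha => fct_pos n σ a ha
  parts_sum := fct_sum n σ

lemma zmu_replicate (r : ℕ) (m : Multiset ℕ) (hm : ∀ a ∈ m, 2 ≤ a) :
    zmu (m + Multiset.replicate r 1) = r.factorial * zmu m := by
  induction r with
  | zero => simp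
  | succ r ih =>
    rw [Multiset.replicate_succ, Multiset.add_cons, zmu_cons, ih, Nat.factorial_succ]
    have : m.count 1 = 0 := Multiset.count_eq_zero_of_notMem fun h => by have := hm 1 h; omega
    rw [Multiset.count_add, this]; simp; ring

lemma fct_card (n : ℕ) (μ : n.Partition) :
    (Finset.univ.filter fun σ : Equiv.Perm (Fin n) => fctPart n σ = μ).card * zmu μ.parts
      = n.factorial := by
  set m := μ.parts.filter (fun a => 2 ≤ a) with hm
  set r := μ.parts.count 1 with hr
  have hdec : μ.parts = m + Multiset.replicate r 1 := by
    rw [hm, hr, ← Multiset.filter_eq']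
    have e1 : Multiset.filter (fun a => ¬ 2 ≤ a) μ.parts
      = Multiset.filter (fun a => a = 1) μ.parts := by
      apply Multiset.filter_congr
      intro x hx; have := μ.parts_pos hx; omega
    rw [← e1]
    exact (Multiset.filter_add_not _ _).symm
  have hm2 : ∀ a ∈ m, 2 ≤ a := fun a ha => (Multiset.mem_filter.1 ha).2
  have hsum : m.sum + r = n := by
    have := μ.parts_sum
    rw [hdec] at this; simpa using this
  have key := Equiv.Perm.card_of_cycleType_mul_eq (Fin n) m
  rw [if_pos ⟨by simp; omega, hm2⟩] at key
  simp only [Fintype.card_fin] at key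
  rw [hdec, zmu_replicate r m hm2, ← key, show n - m.sum = r by omega]
  unfold zmu
  rw [mul_assoc r.factorial]
  congr 1
  apply congrArg Finset.card
  ext σ
  simp only [Finset.mem_filter, Finset.mem_univ, true_and]
  rw [Nat.Partition.ext_iff]
  change fullCycleType n σ = _ ↔ _
  constructor
  · intro h
    rw [hdec] at h
    have h2 := congrArg (Multiset.filter (fun a => 2 ≤ a)) h
    unfold fullCycleType at h2
    rw [Multiset.filter_add, Multiset.filter_add, Multiset.filter_eq_self.2 hm2,
      Multiset.filter_eq_self.2 (fun a ha => Equiv.Perm.two_le_of_mem_cycleType ha),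
      Multiset.filter_eq_nil.2 (by intro a ha; rw [Multiset.eq_of_mem_replicate ha]; omega),
      Multiset.filter_eq_nil.2 (by intro a ha; rw [Multiset.eq_of_mem_replicate ha]; omega)] at h2
    simpa using h2
  · intro h
    rw [hdec]; unfold fullCycleType
    have hs : σ.support.card = m.sum := by rw [← h, Equiv.Perm.sum_cycleType]
    rw [h, hs, show n - m.sum = r by omega]

def Wsum (w : ℕ → ℚ) (n : ℕ) : ℚ :=
  ∑ σ : Equiv.Perm (Fin n), ((fullCycleType n σ).map w).prod

def gmu (w : ℕ → ℚ) (s : Multiset ℕ) : ℚ := (s.map w).prod / zmu s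

lemma gmu_cons (w : ℕ → ℚ) (k : ℕ) (hk : 0 < k) (s : Multiset ℕ) (hs : ∀ a ∈ s, 0 < a) :
    (k * (s.count k + 1) : ℚ) * gmu w (k ::ₘ s) = w k * gmu w s := by
  unfold gmu
  rw [zmu_cons]
  have h1 : (zmu s : ℚ) ≠ 0 := by exact_mod_cast (zmu_pos s hs).ne'
  have h2 : (k : ℚ) ≠ 0 := by exact_mod_cast hk.ne'
  have h3 : ((s.count k : ℚ) + 1) ≠ 0 := by positivity
  push_cast
  rw [Multiset.map_cons, Multiset.prod_cons]
  field_simp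

lemma Wsum_eq (w : ℕ → ℚ) (n : ℕ) :
    Wsum w n / n.factorial = ∑ μ : n.Partition, gmu w μ.parts := by
  unfold Wsum
  rw [← Finset.sum_fiberwise Finset.univ (fctPart n), Finset.sum_div]
  apply Finset.sum_congr rfl
  intro μ _
  rw [Finset.sum_congr rfl (g := fun _ => (μ.parts.map w).prod)]
  · rw [Finset.sum_const, nsmul_eq_mul, ← fct_card n μ]
    have h1 : (zmu μ.parts : ℚ) ≠ 0 := by
      exact_mod_cast (zmu_pos _ (fun a ha => μ.parts_pos ha)).ne'
    have h3 : ((Finset.univ.filter fun σ : Equiv.Perm (Fin n) => fctPart n σ = μ).card : ℚ) ≠ 0 := by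
      have := fct_card n μ
      intro h0
      have h0' : (Finset.univ.filter fun σ : Equiv.Perm (Fin n) => fctPart n σ = μ).card = 0 := by
        exact_mod_cast h0
      rw [h0', zero_mul] at this
      exact n.factorial_ne_zero this.symm
    unfold gmu
    push_cast
    field_simp
  · intro σ hσ
    rw [Finset.mem_filter] at hσ
    rw [← hσ.2]; rfl

lemma part_step (w : ℕ → ℚ) (n k : ℕ) (hk : 0 < k) (hkn : k ≤ n) :
    ∑ μ : n.Partition, (k * μ.parts.count k : ℚ) * gmu w μ.parts
      = w k * ∑ ν : (n - k).Partition, gmu w ν.parts := by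
  rw [Finset.mul_sum]
  symm
  rw [← Finset.sum_subset (Finset.filter_subset (fun μ : n.Partition => k ∈ μ.parts) Finset.univ)]
  · refine Finset.sum_bij
      (fun (ν : (n-k).Partition) _ => (⟨k ::ₘ ν.parts, ?_, ?_⟩ : n.Partition)) ?_ ?_ ?_ ?_
    · intro a ha
      rcases Multiset.mem_cons.1 ha with h | h
      · omega
      · exact ν.parts_pos h
    · rw [Multiset.sum_cons, ν.parts_sum]; omega
    · intro ν _; simp
    · intro a _ b _ h
      rw [Nat.Partition.ext_iff] at h ⊢
      exact (Multiset.cons_inj_right k).1 h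
    · intro μ hμ
      have hk' : k ∈ μ.parts := (Finset.mem_filter.1 hμ).2
      refine ⟨⟨μ.parts.erase k, fun {a} ha => μ.parts_pos (Multiset.mem_of_mem_erase ha), ?_⟩,
        Finset.mem_univ _, ?_⟩
      · have := μ.parts_sum
        rw [← Multiset.cons_erase hk', Multiset.sum_cons] at this
        omega
      · rw [Nat.Partition.ext_iff]; exact Multiset.cons_erase hk'
    · intro ν _
      rw [← gmu_cons w k hk ν.parts (fun a ha => ν.parts_pos ha)]
      simp
  · intro μ _ h
    have : k ∉ μ.parts := by simpa using h
    rw [Multiset.count_eq_zero_of_notMem this]; simp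

lemma W_rec (w : ℕ → ℚ) (n : ℕ) :
    (n : ℚ) * (Wsum w n / n.factorial)
      = ∑ k ∈ Finset.Icc 1 n, w k * (Wsum w (n - k) / (n - k).factorial) := by
  simp only [Wsum_eq]
  rw [Finset.sum_congr rfl (fun k hk => (part_step w n k (Finset.mem_Icc.1 hk).1
    (Finset.mem_Icc.1 hk).2).symm), Finset.sum_comm, Finset.mul_sum]
  apply Finset.sum_congr rfl
  intro μ _
  rw [← Finset.sum_mul]
  congr 1
  have h1 := μ.parts_sum
  rw [Finset.sum_multiset_count] at h1
  have h2 : ∑ m ∈ μ.parts.toFinset, μ.parts.count m • m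
      = ∑ m ∈ Finset.Icc 1 n, μ.parts.count m • m := by
    apply Finset.sum_subset
    · intro a ha
      rw [Multiset.mem_toFinset] at ha
      rw [Finset.mem_Icc]
      refine ⟨μ.parts_pos ha, ?_⟩
      have := Multiset.single_le_sum (fun _ _ => Nat.zero_le _) a ha
      rwa [μ.parts_sum] at this
    · intro a _ ha
      rw [Multiset.mem_toFinset] at ha
      rw [Multiset.count_eq_zero_of_notMem ha]; simp
  rw [h2] at h1
  have h3 : ((∑ m ∈ Finset.Icc 1 n, μ.parts.count m • m : ℕ) : ℚ) = n := by exact_mod_cast h1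
  rw [← h3]; push_cast
  apply Finset.sum_congr rfl
  intro k _; rw [nsmul_eq_mul]; push_cast; ring

lemma W_zero (w : ℕ → ℚ) : Wsum w 0 = 1 := by
  unfold Wsum
  rw [Fintype.sum_unique]
  have : fullCycleType 0 default = 0 := by
    by_contra h
    obtain ⟨a, ha⟩ := Multiset.exists_mem_of_ne_zero h
    have h1 := fct_pos 0 default a ha
    have h2 := Multiset.single_le_sum (fun _ _ => Nat.zero_le _) a ha
    rw [fct_sum] at h2; omega
  rw [this]; simp

lemma mp_eq (n : ℕ) (σ c : Equiv.Perm (Fin n)) (hc : c ∈ σ.cycleFactorsFinset) (i : Fin n)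
    (hi : i ∈ c.support) : Function.minimalPeriod σ i = c.support.card := by
  have hcyc : c.IsCycle := (Equiv.Perm.mem_cycleFactorsFinset_iff.1 hc).1
  have hco : c = σ.cycleOf i := Equiv.Perm.cycle_is_cycleOf hi hc
  have key : ∀ k, Function.minimalPeriod σ i ∣ k ↔ c.support.card ∣ k := by
    intro k
    rw [← Function.isPeriodicPt_iff_minimalPeriod_dvd, ← hcyc.orderOf, orderOf_dvd_iff_pow_eq_one,
      hcyc.pow_eq_one_iff' (Equiv.Perm.mem_support.1 hi), hco, Equiv.Perm.cycleOf_pow_apply_self,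
      Function.IsPeriodicPt, Function.IsFixedPt, ← Equiv.Perm.coe_pow]
  exact Nat.dvd_antisymm ((key _).2 dvd_rfl) ((key _).1 dvd_rfl)

lemma mp_pos (n : ℕ) (σ : Equiv.Perm (Fin n)) (i : Fin n) : 0 < Function.minimalPeriod σ i := by
  apply Function.minimalPeriod_pos_of_mem_periodicPts
  refine Function.mk_mem_periodicPts (orderOf_pos σ) ?_
  rw [Function.IsPeriodicPt, Function.IsFixedPt, ← Equiv.Perm.coe_pow, pow_orderOf_eq_one]; rfl

lemma fct_map_sum (n : ℕ) (σ : Equiv.Perm (Fin n)) (g : ℕ → ℚ) :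
    ((fullCycleType n σ).map g).sum
      = ∑ i, g (Function.minimalPeriod σ i) / Function.minimalPeriod σ i := by
  rw [← Finset.sum_add_sum_compl σ.support]
  unfold fullCycleType
  rw [Multiset.map_add, Multiset.sum_add]
  congr 1
  · rw [← Finset.sum_fiberwise_of_maps_to (t := σ.cycleFactorsFinset) (g := fun i => σ.cycleOf i)]
    · rw [Equiv.Perm.cycleType_def, Multiset.map_map]
      change ∑ c ∈ σ.cycleFactorsFinset, g (c.support.card) = _
      apply Finset.sum_congr rfl
      intro c hc
      have hcyc : c.IsCycle := (Equiv.Perm.mem_cycleFactorsFinset_iff.1 hc).1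
      have hf : (σ.support.filter fun i => σ.cycleOf i = c) = c.support := by
        ext i
        rw [Finset.mem_filter]
        constructor
        · rintro ⟨h1, h2⟩
          rw [← h2, Equiv.Perm.mem_support_cycleOf_iff]
          exact ⟨Equiv.Perm.SameCycle.refl _ _, h1⟩
        · intro h
          exact ⟨Equiv.Perm.mem_cycleFactorsFinset_support_le hc h,
            (Equiv.Perm.cycle_is_cycleOf h hc).symm⟩
      rw [hf, Finset.sum_congr rfl (fun i hi => by rw [mp_eq n σ c hc i hi]), Finset.sum_const,
        nsmul_eq_mul]
      have : (c.support.card : ℚ) ≠ 0 := by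
        have := hcyc.two_le_card_support
        positivity
      field_simp
    · intro i hi
      exact Equiv.Perm.cycleOf_mem_cycleFactorsFinset_iff.2 hi
  · rw [Finset.sum_congr rfl (g := fun _ => g 1)]
    · rw [Finset.sum_const, Finset.card_compl, Fintype.card_fin]; simp
    · intro i hi
      have : Function.minimalPeriod σ i = 1 := by
        rw [Function.minimalPeriod_eq_one_iff_isFixedPt]
        change σ i = i
        simpa using hi
      rw [this]; simp

lemma mp_sq (n : ℕ) (σ : Equiv.Perm (Fin n)) (i : Fin n) :
    Function.minimalPeriod (σ ^ 2 : Equiv.Perm (Fin n)) i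
      = Function.minimalPeriod σ i / Nat.gcd (Function.minimalPeriod σ i) 2 := by
  rw [Equiv.Perm.coe_pow]
  exact Function.minimalPeriod_iterate_eq_div_gcd (by norm_num)

lemma numCycles_sq (n : ℕ) (σ : Equiv.Perm (Fin n)) :
    numCycles n (σ ^ 2) = ((fullCycleType n σ).map fun p => Nat.gcd p 2).sum := by
  have h1 := fct_map_sum n (σ ^ 2) (fun _ => 1)
  have h2 := fct_map_sum n σ (fun p => (Nat.gcd p 2 : ℕ))
  have e1 : ((numCycles n (σ^2) : ℕ) : ℚ)
      = ((fullCycleType n (σ^2)).map (fun _ => (1:ℚ))).sum := by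
    simp [numCycles]
  have e2 : ((((fullCycleType n σ).map fun p => Nat.gcd p 2).sum : ℕ) : ℚ)
      = ((fullCycleType n σ).map (fun p => ((Nat.gcd p 2 : ℕ) : ℚ))).sum := by
    rw [← Nat.coe_castRingHom, map_multiset_sum, Multiset.map_map]; rfl
  have : ((numCycles n (σ^2) : ℕ) : ℚ)
      = (((fullCycleType n σ).map fun p => Nat.gcd p 2).sum : ℕ) := by
    rw [e1, e2, h1, h2]
    apply Finset.sum_congr rfl
    intro i _
    rw [mp_sq]
    have hp := mp_pos n σ i
    set p := Function.minimalPeriod σ i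
    have hg : 0 < Nat.gcd p 2 := Nat.gcd_pos_of_pos_left _ hp
    rw [Nat.cast_div (Nat.gcd_dvd_left _ _) (by positivity)]
    rw [one_div_div]
  exact_mod_cast this

lemma numOdd_sq (n : ℕ) (σ : Equiv.Perm (Fin n)) :
    numOddCycles n (σ ^ 2)
      = ((fullCycleType n σ).map fun p => if 4 ∣ p then 0 else Nat.gcd p 2).sum := by
  have h1 := fct_map_sum n (σ ^ 2) (fun p => if p % 2 = 1 then 1 else 0)
  have h2 := fct_map_sum n σ (fun p => ((if 4 ∣ p then 0 else Nat.gcd p 2 : ℕ) : ℚ))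
  have e1 : ((numOddCycles n (σ^2) : ℕ) : ℚ)
      = ((fullCycleType n (σ^2)).map (fun p => if p % 2 = 1 then (1:ℚ) else 0)).sum := by
    unfold numOddCycles
    generalize fullCycleType n (σ^2) = s
    induction s using Multiset.induction with
    | empty => simp
    | cons a s ih =>
      rw [Multiset.filter_cons, Multiset.card_add, Multiset.map_cons, Multiset.sum_cons, ← ih]
      split_ifs <;> simp
  have e2 : ((((fullCycleType n σ).map fun p => if 4 ∣ p then 0 else Nat.gcd p 2).sum : ℕ) : ℚ)
      = ((fullCycleType n σ).map (fun p => ((if 4 ∣ p then 0 else Nat.gcd p 2 : ℕ) : ℚ))).sum := by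
    rw [← Nat.coe_castRingHom, map_multiset_sum, Multiset.map_map]; rfl
  have : ((numOddCycles n (σ^2) : ℕ) : ℚ)
      = (((fullCycleType n σ).map fun p => if 4 ∣ p then 0 else Nat.gcd p 2).sum : ℕ) := by
    rw [e1, e2, h1, h2]
    apply Finset.sum_congr rfl
    intro i _
    rw [mp_sq]
    have hp := mp_pos n σ i
    set p := Function.minimalPeriod σ i
    have hg : 0 < Nat.gcd p 2 := Nat.gcd_pos_of_pos_left _ hp
    have hodd : (p / Nat.gcd p 2) % 2 = 1 ↔ ¬ 4 ∣ p := by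
      rcases Nat.even_or_odd' p with ⟨q, hq | hq⟩
      · have : Nat.gcd p 2 = 2 := by
          rw [Nat.gcd_comm]; exact Nat.gcd_eq_left ⟨q, hq⟩
        rw [this]; omega
      · have : Nat.gcd p 2 = 1 := by
          rw [hq]; simp
        rw [this]; omega
    rw [Nat.cast_div (Nat.gcd_dvd_left _ _) (by positivity)]
    by_cases h4 : 4 ∣ p
    · rw [if_neg (by rw [hodd]; simpa using h4), if_pos h4]; simp
    · rw [if_pos (hodd.2 h4), if_neg h4, one_div_div]
  exact_mod_cast this

lemma prod_map_pow_sum (s : Multiset ℕ) (x : ℚ) (e : ℕ → ℕ) :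
    (s.map fun p => x ^ e p).prod = x ^ (s.map e).sum := by
  induction s using Multiset.induction with
  | empty => simp
  | cons a s ih => simp [ih, pow_add]

lemma numCycles_sq_bounds (n : ℕ) (hn : 1 ≤ n) (σ : Equiv.Perm (Fin n)) :
    numCycles n σ ∈ Finset.Icc 1 n := by
  have h1 := fct_sum n σ
  have h2 := fct_pos n σ
  unfold numCycles
  generalize fullCycleType n σ = s at *
  rw [Finset.mem_Icc]
  constructor
  · rw [Nat.succ_le_iff, Multiset.card_pos]
    rintro rfl
    simp at h1; omega
  · rw [← h1]
    clear h1
    induction s using Multiset.induction with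
    | empty => simp
    | cons a s ih =>
      have := ih (fun b hb => h2 b (Multiset.mem_cons_of_mem hb))
      have := h2 a (Multiset.mem_cons_self _ _)
      simp; omega

lemma W_C (n : ℕ) (hn : 1 ≤ n) (x : ℚ) :
    Wsum (fun p => if 4 ∣ p then 0 else x ^ Nat.gcd p 2) n
      = ∑ k ∈ Finset.Icc 1 n, (cnk n k : ℚ) * x ^ k := by
  have h1 : ∀ σ : Equiv.Perm (Fin n),
      ((fullCycleType n σ).map (fun p => if 4 ∣ p then 0 else x ^ Nat.gcd p 2)).prod
      = if (∀ p ∈ fullCycleType n σ, ¬ (4 ∣ p)) then x ^ numCycles n (σ ^ 2) else 0 := by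
    intro σ
    rw [numCycles_sq, ← prod_map_pow_sum]
    split_ifs with h
    · congr 1
      apply Multiset.map_congr rfl
      intro p hp
      rw [if_neg (h p hp)]
    · push Not at h
      obtain ⟨p, hp, h4⟩ := h
      rw [Multiset.prod_eq_zero_iff, Multiset.mem_map]
      exact ⟨p, hp, if_pos h4⟩
  unfold Wsum
  simp only [h1]
  rw [← Finset.sum_filter,
    ← Finset.sum_fiberwise_of_maps_to (t := Finset.Icc 1 n) (g := fun σ => numCycles n (σ^2))
      (fun σ _ => numCycles_sq_bounds n hn _)]
  apply Finset.sum_congr rfl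
  intro k _
  rw [Finset.filter_filter, Finset.sum_congr rfl (g := fun _ => x ^ k)]
  · rw [Finset.sum_const, nsmul_eq_mul]; rfl
  · intro σ hσ; rw [(Finset.mem_filter.1 hσ).2.2]

lemma W_D (n : ℕ) (hn : 1 ≤ n) (x : ℚ) :
    Wsum (fun p => x ^ (if 4 ∣ p then 0 else Nat.gcd p 2)) n
      = ∑ k ∈ Finset.range (n + 1), (dnk n k : ℚ) * x ^ k := by
  unfold Wsum
  simp only [prod_map_pow_sum, ← numOdd_sq]
  rw [← Finset.sum_fiberwise_of_maps_to (t := Finset.range (n+1))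
      (g := fun σ => numOddCycles n (σ^2))]
  · apply Finset.sum_congr rfl
    intro k _
    rw [Finset.sum_congr rfl (g := fun _ => x ^ k)]
    · rw [Finset.sum_const, nsmul_eq_mul]; rfl
    · intro σ hσ; rw [(Finset.mem_filter.1 hσ).2]
  · intro σ _
    have h1 := (Finset.mem_Icc.1 (numCycles_sq_bounds n hn (σ ^ 2))).2
    have h2 : numOddCycles n (σ^2) ≤ numCycles n (σ^2) :=
      Multiset.card_le_card (Multiset.filter_le _ _)
    rw [Finset.mem_range]; omega

open PowerSeries in
def Fe (m : ℕ) (e : Sym2 (Fin m)) : PowerSeries ℚ :=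
  PowerSeries.mk fun k => if e.IsDiag ∨ (Even k ∧
    ((∀ a ∈ e, ∀ b ∈ e, a.val % 2 = b.val % 2) ∨ k ≤ 2)) then 1 else 0

lemma sum_sym2 (m : ℕ) (φ : Sym2 (Fin m) → ℚ) :
    ∑ e : Sym2 (Fin m), (if e.IsDiag then φ e else 2 * φ e)
      = ∑ a : Fin m, ∑ b : Fin m, φ s(a, b) := by
  rw [← Finset.sum_product', ← Finset.sum_fiberwise (Finset.univ ×ˢ Finset.univ)
    (fun p : Fin m × Fin m => s(p.1, p.2))]
  apply Finset.sum_congr rfl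
  intro e _
  induction e using Sym2.ind with
  | _ a b =>
  rw [Finset.sum_congr rfl (g := fun _ => φ s(a, b))
    (fun p hp => by rw [(Finset.mem_filter.1 hp).2])]
  rw [Finset.sum_const, nsmul_eq_mul]
  by_cases h : a = b
  · subst h
    have : (Finset.filter (fun p : Fin m × Fin m => s(p.1, p.2) = s(a, a))
        (Finset.univ ×ˢ Finset.univ)) = {(a, a)} := by
      ext ⟨x, y⟩; simp
    rw [this]; simp
  · have : (Finset.filter (fun p : Fin m × Fin m => s(p.1, p.2) = s(a, b))
        (Finset.univ ×ˢ Finset.univ)) = {(a, b), (b, a)} := by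
      ext ⟨x, y⟩; simp
    rw [this, Finset.card_pair (by simp [h])]; simp [h]

open PowerSeries in
lemma geom2 (c : ℚ) : (PowerSeries.mk fun k => if Even k then c ^ (k / 2) else 0)
    * (1 - PowerSeries.C c * PowerSeries.X ^ 2) = 1 := by
  ext n
  rw [mul_sub, mul_one, map_sub, ← mul_assoc, PowerSeries.coeff_mul_X_pow', mul_comm _ (C c),
    PowerSeries.coeff_C_mul, PowerSeries.coeff_mk, PowerSeries.coeff_mk, PowerSeries.coeff_one]
  rcases n with _ | _ | n
  · simp
  · simp
  · simp only [Nat.even_add]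
    have : (n + 1 + 1) / 2 = n / 2 + 1 := by omega
    by_cases h : Even n
    · simp [h, this, pow_succ, mul_comm]
    · simp [h, Nat.even_add_one]

def vE (m : ℕ) (e : Sym2 (Fin m)) (k : ℕ) : ℚ :=
  if k = 0 then 0 else
  if e.IsDiag then 1 else
    if Even k then 2 * (if (∀ a ∈ e, ∀ b ∈ e, a.val % 2 = b.val % 2) then 1
      else (-1) ^ (k / 2 + 1)) else 0

open PowerSeries in
lemma Fe_ld (m : ℕ) (e : Sym2 (Fin m)) :
    PowerSeries.X * PowerSeries.derivative ℚ (Fe m e)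
      = Fe m e * PowerSeries.mk (vE m e) := by
  by_cases h1 : e.IsDiag
  · have hF : Fe m e = PowerSeries.mk 1 := by
      ext k; simp [Fe, h1]
    have hv : PowerSeries.mk (vE m e) = X * Fe m e := by
      ext k
      rcases k with _ | k
      · simp [vE]
      · rw [hF, PowerSeries.coeff_succ_X_mul]; simp [vE, h1]
    have h := PowerSeries.mk_one_mul_one_sub_eq_one ℚ
    rw [← hF] at h
    have hd := congrArg (derivative ℚ) h
    rw [Derivation.leibniz] at hd
    simp only [map_sub, Derivation.map_one_eq_zero, derivative_X, smul_eq_mul] at hd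
    rw [hv]
    linear_combination (X * Fe m e) * hd - X * (derivative ℚ (Fe m e)) * h
  · by_cases h2 : (∀ a ∈ e, ∀ b ∈ e, a.val % 2 = b.val % 2)
    · have hF : Fe m e = (PowerSeries.mk fun k => if Even k then (1:ℚ) ^ (k / 2) else 0) := by
        ext k; simp only [Fe, coeff_mk, one_pow]; congr 1; simp only [h1, h2, false_or, eq_iff_iff]; tauto
      have hv : PowerSeries.mk (vE m e) = 2 * X ^ 2 * Fe m e := by
        ext k
        rw [show (2 : PowerSeries ℚ) = C 2 from (map_ofNat C 2).symm, mul_assoc, coeff_C_mul, coeff_X_pow_mul', hF]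
        rcases k with _ | _ | k
        · simp [vE]
        · simp [vE, h1]
        · simp only [vE, if_neg h1, if_pos h2, coeff_mk]; simp [Nat.even_add]
      have h := geom2 1
      rw [← hF] at h
      have hd := congrArg (derivative ℚ) h
      rw [Derivation.leibniz] at hd
      simp only [map_sub, map_one, one_mul, Derivation.map_one_eq_zero, derivative_X, smul_eq_mul,
        Derivation.leibniz_pow] at hd h
      rw [hv]
      simp at hd
      linear_combination (X * Fe m e) * hd - X * (derivative ℚ (Fe m e)) * h
    · have hF : Fe m e = 1 + X ^ 2 := by
        ext k; simp only [Fe, coeff_mk, map_add, coeff_one, coeff_X_pow]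
        rcases k with _ | _ | _ | k
        · simp [h1]
        · simp [h1]
        · simp [h1]
        · simp only [h1, h2]; simp
      have h := geom2 (-1)
      set G := (PowerSeries.mk fun k => if Even k then (-1:ℚ) ^ (k / 2) else 0) with hG
      have hv : PowerSeries.mk (vE m e) = 2 * X ^ 2 * G := by
        ext k
        rw [show (2 : PowerSeries ℚ) = C 2 from (map_ofNat C 2).symm, mul_assoc, coeff_C_mul, coeff_X_pow_mul', hG]
        rcases k with _ | _ | k
        · simp [vE]
        · simp [vE, h1]
        · simp only [vE, if_neg h1, if_neg h2, coeff_mk]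
          have : (k + 1 + 1) / 2 = k / 2 + 1 := by omega
          simp [Nat.even_add, this, pow_succ]
      rw [hv, hF]
      simp only [map_add, Derivation.map_one_eq_zero, derivative_X, smul_eq_mul,
        Derivation.leibniz_pow, map_neg, map_one] at h ⊢
      simp
      linear_combination (-2 * X ^ 2) * h

open PowerSeries in
lemma prod_ld {ι : Type*} (s : Finset ι) (F v : ι → PowerSeries ℚ)
    (h : ∀ e ∈ s, X * derivative ℚ (F e) = F e * v e) :
    X * derivative ℚ (∏ e ∈ s, F e) = (∏ e ∈ s, F e) * ∑ e ∈ s, v e := by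
  induction s using Finset.induction_on with
  | empty => simp
  | insert a s ha ih =>
    rw [Finset.prod_insert ha, Finset.sum_insert ha, Derivation.leibniz, smul_eq_mul, smul_eq_mul]
    have h1 := h a (Finset.mem_insert_self _ _)
    have h2 := ih (fun e he => h e (Finset.mem_insert_of_mem he))
    linear_combination F a * h2 + (∏ e ∈ s, F e) * h1

def wM (m k : ℕ) : ℚ :=
  if k % 2 = 1 then m else if k % 4 = 2 then (m : ℚ) ^ 2 else if m % 2 = 1 then 1 else 0

lemma alt_sign_sum (m : ℕ) : ∑ a : Fin m, (-1 : ℚ) ^ a.val = if m % 2 = 1 then 1 else 0 := by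
  rw [Fin.sum_univ_eq_sum_range (fun i => (-1 : ℚ) ^ i)]
  induction m with
  | zero => simp
  | succ m ih =>
    rw [Finset.sum_range_succ, ih]
    rcases Nat.even_or_odd m with h | h
    · have := Nat.even_iff.1 h
      rw [h.neg_one_pow, if_neg (by omega), if_pos (by omega)]; norm_num
    · have := Nat.odd_iff.1 h
      rw [h.neg_one_pow, if_pos (by omega), if_neg (by omega)]; norm_num

lemma sum_vE (m k : ℕ) (hk : 1 ≤ k) : ∑ e : Sym2 (Fin m), vE m e k = wM m k := by
  have hk0 : k ≠ 0 := by omega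
  unfold wM
  by_cases ho : k % 2 = 1
  · rw [if_pos ho]
    have hne : ¬ Even k := by rw [Nat.even_iff]; omega
    simp only [vE, if_neg hk0, if_neg hne]
    have := sum_sym2 m (fun e => if e.IsDiag then 1 else 0)
    rw [Finset.sum_congr rfl (g := fun e : Sym2 (Fin m) => if e.IsDiag then (1:ℚ) else 0)] at this
    · rw [this]; simp
    · intro e _; split_ifs <;> simp
  · rw [if_neg ho]
    have he : Even k := by rw [Nat.even_iff]; omega
    simp only [vE, if_neg hk0, if_pos he]
    have := sum_sym2 m (fun e => if (∀ a ∈ e, ∀ b ∈ e, a.val % 2 = b.val % 2) then 1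
      else (-1) ^ (k / 2 + 1))
    rw [Finset.sum_congr rfl (g := fun e : Sym2 (Fin m) => if e.IsDiag then (1:ℚ) else
      2 * (if (∀ a ∈ e, ∀ b ∈ e, a.val % 2 = b.val % 2) then 1
      else (-1) ^ (k / 2 + 1)))] at this
    · rw [this]
      by_cases h4 : k % 4 = 2
      · have : Even (k / 2 + 1) := by rw [Nat.even_iff]; omega
        rw [if_pos h4, this.neg_one_pow]
        simp [sq]
      · have : Odd (k / 2 + 1) := by rw [Nat.odd_iff]; omega
        rw [if_neg h4, this.neg_one_pow]
        have h : ∀ a b : Fin m, (if (∀ x ∈ s(a, b), ∀ y ∈ s(a, b), x.val % 2 = y.val % 2)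
            then (1:ℚ) else -1) = (-1) ^ a.val * (-1) ^ b.val := by
          intro a b
          rw [← pow_add]
          by_cases hab : a.val % 2 = b.val % 2
          · rw [if_pos, Even.neg_one_pow]
            · rw [Nat.even_iff]; omega
            · intro x hx y hy
              rw [Sym2.mem_iff] at hx hy
              rcases hx with rfl | rfl <;> rcases hy with rfl | rfl <;> omega
          · rw [if_neg, Odd.neg_one_pow]
            · rw [Nat.odd_iff]; omega
            · intro h; exact hab (h a (by simp) b (by simp))
        simp only [h]
        rw [← Finset.sum_mul_sum, alt_sign_sum]
        split_ifs <;> simp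
    · intro e _
      split_ifs with h1 h2 <;> try rfl
      exfalso; apply h2
      induction e using Sym2.ind with
      | _ a b =>
      have : a = b := by simpa using h1
      subst this
      intro x hx y hy
      simp at hx hy; rw [hx, hy]

open PowerSeries in
lemma prodF_eq (m n : ℕ) :
    coeff n (∏ e : Sym2 (Fin m), Fe m e) = Wsum (wM m) n / n.factorial := by
  induction n using Nat.strong_induction_on with
  | _ n ih =>
  rcases Nat.eq_zero_or_pos n with rfl | hn
  · rw [W_zero, coeff_zero_eq_constantCoeff_apply, map_prod]
    simp only [Nat.factorial_zero, Nat.cast_one, div_one]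
    apply Finset.prod_eq_one
    intro e _
    rw [← coeff_zero_eq_constantCoeff_apply]
    simp [Fe]
  · have h := congrArg (coeff n) (prod_ld Finset.univ (Fe m) (fun e => PowerSeries.mk (vE m e))
      (fun e _ => Fe_ld m e))
    obtain ⟨r, rfl⟩ : ∃ r, n = r + 1 := ⟨n - 1, by omega⟩
    rw [coeff_succ_X_mul, coeff_derivative, mul_comm (∏ e : Sym2 (Fin m), Fe m e), coeff_mul,
      Finset.Nat.sum_antidiagonal_eq_sum_range_succ_mk] at h
    have hw := W_rec (wM m) (r + 1)
    have hne : ((r + 1 : ℕ) : ℚ) ≠ 0 := by positivity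
    apply mul_left_cancel₀ hne
    rw [hw, mul_comm]
    push_cast
    rw [h, Finset.sum_range_succ']
    have z : coeff 0 (∑ e : Sym2 (Fin m), PowerSeries.mk (vE m e)) = 0 := by
      rw [map_sum]; apply Finset.sum_eq_zero; intro e _; simp [vE]
    rw [z, zero_mul, add_zero, Finset.range_eq_Ico, Finset.sum_Ico_add' (fun k => coeff k
      (∑ e : Sym2 (Fin m), PowerSeries.mk (vE m e)) * coeff (r + 1 - k) (∏ e, Fe m e)) 0 (r+1) 1]
    apply Finset.sum_congr
    · ext x; simp
    · intro k hk
      rw [Finset.mem_Icc] at hk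
      rw [← ih (r + 1 - k) (by omega), map_sum]
      simp only [coeff_mk]
      rw [sum_vE m k hk.1]

def VV (s : ℕ → ℤ) {n m : ℕ} (π : Equiv.Perm (Fin n)) (f : Fin n → Fin m) : Prop :=
  ∀ i j : Fin n, i < j → f i < f j ∨
    (f i = f j ∧ s (f i) * ((π i).val : ℤ) < s (f i) * ((π j).val : ℤ))

def sg (v : ℕ) : ℤ := if v % 2 = 0 then 1 else -1

lemma VV_mono {s : ℕ → ℤ} {n m : ℕ} {π : Equiv.Perm (Fin n)} {f : Fin n → Fin m}
    (h : VV s π f) : Monotone f := by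
  intro i j hij
  rcases hij.eq_or_lt with rfl | hlt
  · exact le_rfl
  · rcases h i j hlt with h | h
    · exact h.le
    · exact h.1.le

def ecnt {n m : ℕ} (π : Equiv.Perm (Fin n)) (f : Fin n → Fin m) (e : Sym2 (Fin m)) : ℕ :=
  (Finset.univ.filter fun i => s(f i, f (π i)) = e).card

def mcnt {n m : ℕ} (π : Equiv.Perm (Fin n)) (f : Fin n → Fin m) (a b : Fin m) : ℕ :=
  (Finset.univ.filter fun i => f i = a ∧ f (π i) = b).card

lemma mcnt_symm {n m : ℕ} {π : Equiv.Perm (Fin n)} (hπ : ∀ i, π (π i) = i) (f : Fin n → Fin m)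
    (a b : Fin m) : mcnt π f a b = mcnt π f b a := by
  unfold mcnt
  apply Finset.card_bij (fun i _ => π i)
  · intro i hi; simp at hi ⊢; rw [hπ]; exact hi.symm
  · intro i _ j _ h; exact π.injective h
  · intro i hi; simp at hi; exact ⟨π i, by simp [hπ, hi], hπ i⟩

lemma ecnt_diag {n m : ℕ} (π : Equiv.Perm (Fin n)) (f : Fin n → Fin m)
    (a : Fin m) : ecnt π f s(a, a) = mcnt π f a a := by
  unfold ecnt mcnt
  congr 1; ext i; simp

lemma ecnt_off {n m : ℕ} {π : Equiv.Perm (Fin n)} (hπ : ∀ i, π (π i) = i) (f : Fin n → Fin m)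
    (a b : Fin m) (hab : a ≠ b) : ecnt π f s(a, b) = 2 * mcnt π f a b := by
  have h : ecnt π f s(a, b) = mcnt π f a b + mcnt π f b a := by
    unfold ecnt mcnt
    rw [← Finset.card_union_of_disjoint]
    · congr 1; ext i; simp
    · rw [Finset.disjoint_filter]
      rintro i _ ⟨h1, _⟩ ⟨h2, _⟩
      exact hab (h1.symm.trans h2)
  rw [h, mcnt_symm hπ f b a]; ring

lemma mono_unique {α : Type*} [LinearOrder α] {n : ℕ} {g g' : Fin n → α} (hg : Monotone g)
    (hg' : Monotone g') (h : (Finset.univ : Finset (Fin n)).val.map g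
      = (Finset.univ : Finset (Fin n)).val.map g') : g = g' := by
  rw [Fin.univ_val_map, Fin.univ_val_map, Multiset.coe_eq_coe] at h
  exact List.ofFn_injective (h.eq_of_sortedLE hg.sortedLE_ofFn hg'.sortedLE_ofFn)

lemma sg_cases (v : ℕ) : sg v = 1 ∨ sg v = -1 := by
  unfold sg; split_ifs <;> simp

lemma pair_inj {n m : ℕ} {π π' : Equiv.Perm (Fin n)} (hπ : ∀ i, π (π i) = i)
    (hπ' : ∀ i, π' (π' i) = i) {f f' : Fin n → Fin m} (h : VV sg π f) (h' : VV sg π' f')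
    (he : ∀ e, ecnt π f e = ecnt π' f' e) : π = π' ∧ f = f' := by
  have hM : ∀ a b, mcnt π f a b = mcnt π' f' a b := by
    intro a b
    by_cases hab : a = b
    · subst hab; rw [← ecnt_diag, ← ecnt_diag, he]
    · have := he s(a, b)
      rw [ecnt_off hπ f a b hab, ecnt_off hπ' f' a b hab] at this
      omega
  let K : Fin m × Fin m → ℕ ×ₗ ℤ := fun p => toLex (p.1.val, sg p.1 * (p.2.val : ℤ))
  have hK : Function.Injective K := by
    rintro ⟨a, b⟩ ⟨c, d⟩ hh
    have hh' : (a.val, sg a * (b.val : ℤ)) = (c.val, sg c * (d.val : ℤ)) := toLex.injective hh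
    rw [Prod.mk.injEq] at hh'
    have e1 : a = c := Fin.ext hh'.1
    subst e1
    have := hh'.2
    have e2 : b = d := by
      apply Fin.ext
      rcases sg_cases a with hs | hs <;> rw [hs] at this <;> omega
    rw [e2]
  have mono : ∀ (π : Equiv.Perm (Fin n)) (f : Fin n → Fin m), VV sg π f →
      Monotone (fun i => K (f i, f (π i))) := by
    intro π f h i j hij
    rcases hij.eq_or_lt with rfl | hlt
    · exact le_rfl
    · change toLex _ ≤ toLex _
      rw [Prod.Lex.toLex_le_toLex]
      rcases h i j hlt with h1 | ⟨h1, h2⟩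
      · left; exact h1
      · right
        refine ⟨congrArg Fin.val h1, ?_⟩
        change sg (f i) * ((f (π i)).val : ℤ) ≤ sg (f j) * ((f (π j)).val : ℤ)
        rw [← h1]
        rcases sg_cases (f i) with hs | hs <;> rw [hs] at h2 ⊢
        · have : π i ≤ π j := by rw [Fin.le_def]; omega
          have := VV_mono h this
          rw [Fin.le_def] at this; omega
        · have : π j ≤ π i := by rw [Fin.le_def]; omega
          have := VV_mono h this
          rw [Fin.le_def] at this; omega
  have hms : (Finset.univ : Finset (Fin n)).val.map (fun i => (f i, f (π i)))
      = (Finset.univ : Finset (Fin n)).val.map (fun i => (f' i, f' (π' i))) := by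
    ext ⟨a, b⟩
    rw [Multiset.count_map, Multiset.count_map]
    have := hM a b
    unfold mcnt at this
    rw [Finset.card_def, Finset.card_def, Finset.filter_val, Finset.filter_val] at this
    convert this using 3
    · simp [eq_comm]
    · simp [eq_comm]
  have hKP := mono_unique (mono π f h) (mono π' f' h') (by
    have := congrArg (Multiset.map K) hms
    rw [Multiset.map_map, Multiset.map_map] at this
    exact this)
  have hP : ∀ i, (f i, f (π i)) = (f' i, f' (π' i)) := fun i => hK (congrFun hKP i)
  have hf : f = f' := funext fun i => congrArg Prod.fst (hP i)
  refine ⟨?_, hf⟩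
  subst hf
  have hw : ∀ i, f (π i) = f (π' i) := fun i => congrArg Prod.snd (hP i)
  let κ : Fin n → ℕ ×ₗ ℤ := fun x => toLex ((f (π x)).val, sg (f (π x)) * (x.val : ℤ))
  have mono2 : ∀ (τ : Equiv.Perm (Fin n)), (∀ i, τ (τ i) = i) → (∀ i, f (π i) = f (τ i)) →
      VV sg τ f → Monotone (κ ∘ τ) := by
    intro τ hτ hc hV i j hij
    rcases hij.eq_or_lt with rfl | hlt
    · exact le_rfl
    · change toLex _ ≤ toLex _
      rw [Prod.Lex.toLex_le_toLex]
      simp only [hc, hτ]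
      rcases hV i j hlt with h1 | ⟨h1, h2⟩
      · left; exact h1
      · right; refine ⟨congrArg Fin.val h1, ?_⟩
        rw [← h1]; exact h2.le
  have := Tuple.unique_monotone (mono2 π hπ (fun _ => rfl) h) (mono2 π' hπ' hw h')
  ext i
  have hi := congrFun this i
  have hi' : ((f (π (π i))).val, sg (f (π (π i))) * ((π i).val : ℤ))
      = ((f (π (π' i))).val, sg (f (π (π' i))) * ((π' i).val : ℤ)) := toLex.injective hi
  rw [Prod.mk.injEq] at hi'
  rw [← hi'.1] at hi'
  rcases sg_cases (f (π (π i))) with hs | hs <;> rw [hs] at hi' <;> omega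

lemma mcnt_opp {n m : ℕ} {π : Equiv.Perm (Fin n)} (hπ : ∀ i, π (π i) = i)
    {f : Fin n → Fin m} (h : VV sg π f) (a b : Fin m) (hab : a.val % 2 ≠ b.val % 2) :
    mcnt π f a b ≤ 1 := by
  unfold mcnt
  rw [Finset.card_le_one]
  have key : ∀ i j, i < j → f i = a → f (π i) = b → f j = a → f (π j) = b → False := by
    intro i j hij hi1 hi2 hj1 hj2
    have h1 : sg a * ((π i).val : ℤ) < sg a * ((π j).val : ℤ) := by
      rcases h i j hij with h | h
      · rw [hi1, hj1] at h; exact absurd h (lt_irrefl _)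
      · rw [← hi1]; exact h.2
    rcases lt_trichotomy (π i) (π j) with hlt | heq | hlt
    · have h2 : sg b * (i.val : ℤ) < sg b * (j.val : ℤ) := by
        rcases h _ _ hlt with h | h
        · rw [hi2, hj2] at h; exact absurd h (lt_irrefl _)
        · have := h.2; rwa [hi2, hπ, hπ] at this
      rw [Fin.lt_def] at hlt hij
      unfold sg at h1 h2
      split_ifs at h1 h2 <;> omega
    · exact hij.ne (π.injective heq)
    · have h2 : sg b * (j.val : ℤ) < sg b * (i.val : ℤ) := by
        rcases h _ _ hlt with h | h
        · rw [hi2, hj2] at h; exact absurd h (lt_irrefl _)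
        · have := h.2; rwa [hj2, hπ, hπ] at this
      rw [Fin.lt_def] at hlt hij
      unfold sg at h1 h2
      split_ifs at h1 h2 <;> omega
  intro i hi j hj
  simp at hi hj
  by_contra hne
  rcases lt_or_gt_of_ne hne with hlt | hlt
  · exact key i j hlt hi.1 hi.2 hj.1 hj.2
  · exact key j i hlt hj.1 hj.2 hi.1 hi.2

lemma exists_sort {T α : Type*} [Fintype T] [LinearOrder α] (key : T → α)
    (hk : Function.Injective key) (n : ℕ) (hn : Fintype.card T = n) :
    ∃ φ : Fin n ≃ T, StrictMono (fun i => key (φ i)) := by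
  let _ : LinearOrder T := LinearOrder.lift' key hk
  refine ⟨(monoEquivOfFin T hn).toEquiv, ?_⟩
  intro i j hij
  exact (monoEquivOfFin T hn).strictMono hij

section TT
variable {m : ℕ} (M : Fin m → Fin m → ℕ) (hs : ∀ a b, M a b = M b a)

def TT : Type := Σ p : Fin m × Fin m, Fin (M p.1 p.2)

instance : Fintype (TT M) := inferInstanceAs (Fintype (Σ p : Fin m × Fin m, Fin (M p.1 p.2)))

def swT (t : TT M) : TT M :=
  ⟨(t.1.2, t.1.1), ⟨if t.1.1.val % 2 = 0 then t.2.val else M t.1.1 t.1.2 - 1 - t.2.val, by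
    have := t.2.isLt
    have := hs t.1.1 t.1.2
    dsimp only
    split_ifs <;> omega⟩⟩

def keyT (t : TT M) : ℕ ×ₗ (ℤ ×ₗ ℕ) :=
  toLex (t.1.1.val, toLex (sg t.1.1 * (t.1.2.val : ℤ), t.2.val))

lemma keyT_inj : Function.Injective (keyT M) := by
  rintro ⟨⟨a, b⟩, k⟩ ⟨⟨c, d⟩, k'⟩ h
  have h1 := toLex.injective h
  rw [Prod.mk.injEq] at h1
  have h2 := toLex.injective h1.2
  rw [Prod.mk.injEq] at h2
  obtain ⟨h3, h4, h5⟩ := And.intro h1.1 h2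
  simp only at h3 h4 h5
  have e1 : a = c := Fin.ext h3
  subst e1
  have e2 : b = d := by
    apply Fin.ext
    rcases sg_cases a with hs | hs <;> rw [hs] at h4 <;> omega
  subst e2
  have e3 : k = k' := Fin.ext h5
  subst e3
  rfl

lemma swT_swT (ho : ∀ a b : Fin m, a.val % 2 ≠ b.val % 2 → M a b ≤ 1) (t : TT M) :
    swT M hs (swT M hs t) = t := by
  obtain ⟨⟨a, b⟩, k⟩ := t
  unfold swT
  have := ho a b
  have hk := k.isLt
  have h2 := hs a b
  simp only at hk ⊢
  congr 1
  apply Fin.ext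
  simp only
  by_cases h : a.val % 2 = b.val % 2
  · split_ifs <;> omega
  · have := this h
    split_ifs <;> omega

lemma keyT_lt (t t' : TT M) : keyT M t < keyT M t' ↔ t.1.1 < t'.1.1 ∨ (t.1.1 = t'.1.1 ∧
    (sg t.1.1 * (t.1.2.val : ℤ) < sg t.1.1 * (t'.1.2.val : ℤ) ∨
      (t.1.2 = t'.1.2 ∧ t.2.val < t'.2.val))) := by
  unfold keyT
  rw [Prod.Lex.toLex_lt_toLex, Prod.Lex.toLex_lt_toLex]
  simp only
  rw [← Fin.lt_def, ← Fin.ext_iff]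
  constructor
  · rintro (h | ⟨h, h1 | ⟨h1, h2⟩⟩)
    · exact Or.inl h
    · right; refine ⟨h, Or.inl ?_⟩; rwa [← h] at h1
    · right; refine ⟨h, Or.inr ⟨?_, h2⟩⟩
      rw [← h] at h1
      apply Fin.ext
      rcases sg_cases t.1.1 with hs | hs <;> rw [hs] at h1 <;> omega
  · rintro (h | ⟨h, h1 | ⟨h1, h2⟩⟩)
    · exact Or.inl h
    · right; refine ⟨h, Or.inl ?_⟩; rwa [← h]
    · right; refine ⟨h, Or.inr ⟨?_, h2⟩⟩
      rw [← h, h1]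

lemma swT_key (t t' : TT M) (h : keyT M t < keyT M t') : t.1.1 < t'.1.1 ∨ (t.1.1 = t'.1.1 ∧
    ((sg t.1.1 = 1 ∧ keyT M (swT M hs t) < keyT M (swT M hs t')) ∨
     (sg t.1.1 = -1 ∧ keyT M (swT M hs t') < keyT M (swT M hs t)))) := by
  rw [keyT_lt] at h
  obtain ⟨⟨a, b⟩, k⟩ := t
  obtain ⟨⟨c, d⟩, k'⟩ := t'
  simp only at h
  rcases h with h | ⟨h, h1⟩
  · exact Or.inl h
  · right
    subst h
    refine ⟨rfl, ?_⟩
    rw [keyT_lt, keyT_lt]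
    simp only [swT]
    have hk := k.isLt
    have hk' := k'.isLt
    simp only at hk hk'
    rcases h1 with h1 | ⟨h1, h2⟩
    · rcases sg_cases a with h3 | h3 <;> rw [h3] at h1 <;> simp only [h3]
      · left; refine ⟨trivial, Or.inl ?_⟩; rw [Fin.lt_def]; omega
      · right; refine ⟨trivial, Or.inl ?_⟩; rw [Fin.lt_def]; omega
    · subst h1
      unfold sg
      by_cases hp : a.val % 2 = 0
      · simp only [if_pos hp]
        left; refine ⟨trivial, Or.inr ⟨trivial, Or.inr ⟨trivial, h2⟩⟩⟩
      · simp only [if_neg hp]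
        right; refine ⟨trivial, Or.inr ⟨trivial, Or.inr ⟨trivial, by omega⟩⟩⟩

end TT

lemma TT_count {m : ℕ} (M : Fin m → Fin m → ℕ) (hs : ∀ a b, M a b = M b a) (a b : Fin m) :
    (Finset.univ.filter fun t : TT M => s(t.1.1, t.1.2) = s(a, b)).card
      = if a = b then M a a else 2 * M a b := by
  rw [Finset.card_filter]
  change ∑ t : (Σ p : Fin m × Fin m, Fin (M p.1 p.2)), (if s(t.1.1, t.1.2) = s(a, b) then 1 else 0)
    = _
  rw [Fintype.sum_sigma]
  rw [Finset.sum_congr rfl (g := fun p : Fin m × Fin m =>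
    if s(p.1, p.2) = s(a, b) then M p.1 p.2 else 0)
    (fun p _ => by split_ifs <;> simp), ← Finset.sum_filter]
  by_cases h : a = b
  · subst h
    have : (Finset.filter (fun p : Fin m × Fin m => s(p.1, p.2) = s(a, a))
        Finset.univ) = {(a, a)} := by
      ext ⟨x, y⟩; simp
    rw [this]; simp
  · have : (Finset.filter (fun p : Fin m × Fin m => s(p.1, p.2) = s(a, b))
        Finset.univ) = {(a, b), (b, a)} := by
      ext ⟨x, y⟩; simp
    rw [this, Finset.sum_pair (by simp [h]), if_neg h, hs b a]; ring

def adm {m : ℕ} (e : Sym2 (Fin m)) (k : ℕ) : Prop :=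
  e.IsDiag ∨ (Even k ∧ ((∀ a ∈ e, ∀ b ∈ e, a.val % 2 = b.val % 2) ∨ k ≤ 2))

lemma pair_surj {n m : ℕ} (l : Sym2 (Fin m) → ℕ) (hl : ∑ e, l e = n) (ha : ∀ e, adm e (l e)) :
    ∃ (π : Equiv.Perm (Fin n)) (f : Fin n → Fin m), (∀ i, π (π i) = i) ∧ VV sg π f ∧
      ∀ e, ecnt π f e = l e := by
  let M : Fin m → Fin m → ℕ := fun a b => if a = b then l s(a, a) else l s(a, b) / 2
  have hs : ∀ a b, M a b = M b a := by
    intro a b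
    by_cases h : a = b
    · subst h; rfl
    · simp only [M, if_neg h, if_neg (Ne.symm h)]; rw [Sym2.eq_swap]
  have ho : ∀ a b : Fin m, a.val % 2 ≠ b.val % 2 → M a b ≤ 1 := by
    intro a b hab
    have hne : a ≠ b := fun h => hab (by rw [h])
    simp only [M, if_neg hne]
    rcases ha s(a, b) with h | ⟨_, h | h⟩
    · exact absurd (by simpa using h) hne
    · exact absurd (h a (by simp) b (by simp)) hab
    · omega
  have hcnt : ∀ e, (Finset.univ.filter fun t : TT M => s(t.1.1, t.1.2) = e).card = l e := by
    intro e
    induction e using Sym2.ind with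
    | _ a b =>
    rw [TT_count M hs]
    by_cases h : a = b
    · subst h; simp [M]
    · rw [if_neg h]
      simp only [M, if_neg h]
      rcases ha s(a, b) with h' | ⟨h', _⟩
      · exact absurd (by simpa using h') h
      · rw [Nat.even_iff] at h'; omega
  have hcard : Fintype.card (TT M) = n := by
    rw [← hl, ← Finset.card_univ, Finset.card_eq_sum_card_fiberwise (t := Finset.univ)
      (f := fun t : TT M => s(t.1.1, t.1.2)) (fun _ _ => by simp)]
    exact Finset.sum_congr rfl fun e _ => hcnt e
  obtain ⟨φ, hφ⟩ := exists_sort (keyT M) (keyT_inj M) n hcard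
  let sw : TT M ≃ TT M := ⟨swT M hs, swT M hs, swT_swT M hs ho, swT_swT M hs ho⟩
  let π : Equiv.Perm (Fin n) := (φ.trans sw).trans φ.symm
  have hπ : ∀ i, φ (π i) = swT M hs (φ i) := by
    intro i; simp [π, sw]
  refine ⟨π, fun i => (φ i).1.1, ?_, ?_, ?_⟩
  · intro i
    apply φ.injective
    rw [hπ, hπ, swT_swT M hs ho]
  · intro i j hij
    rcases swT_key M hs _ _ (hφ hij) with h | ⟨h1, ⟨h2, h3⟩ | ⟨h2, h3⟩⟩
    · exact Or.inl h
    · right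
      refine ⟨h1, ?_⟩
      simp only [h2]
      rw [← hπ, ← hπ] at h3
      have := hφ.lt_iff_lt.1 h3
      rw [Fin.lt_def] at this; omega
    · right
      refine ⟨h1, ?_⟩
      simp only [h2]
      rw [← hπ, ← hπ] at h3
      have := hφ.lt_iff_lt.1 h3
      rw [Fin.lt_def] at this; omega
  · intro e
    rw [← hcnt e]
    unfold ecnt
    apply Finset.card_equiv φ
    intro i
    simp only [Finset.mem_filter, Finset.mem_univ, true_and, hπ]
    rfl

open PowerSeries in
lemma partC (n m : ℕ) :
    ((∑ π ∈ invSet n, (Finset.univ.filter fun f : Fin n → Fin m => VV sg π f).card : ℕ) : ℚ)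
      = coeff n (∏ e : Sym2 (Fin m), Fe m e) := by
  rw [coeff_prod]
  simp only [Fe, coeff_mk]
  rw [Finset.sum_congr rfl (g := fun l : Sym2 (Fin m) →₀ ℕ =>
    if ∀ e, adm e (l e) then (1 : ℚ) else 0)]
  · rw [← Finset.sum_filter, Finset.sum_const, nsmul_eq_mul, mul_one, ← Finset.card_sigma]
    congr 1
    refine Finset.card_bij
      (fun (p : (_ : Equiv.Perm (Fin n)) × (Fin n → Fin m)) _ =>
        Finsupp.equivFunOnFinite.symm (ecnt p.1 p.2)) ?_ ?_ ?_
    · rintro ⟨π, f⟩ hp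
      simp only [Finset.mem_sigma, invSet, Finset.mem_filter, Finset.mem_univ, true_and] at hp
      have hπ : ∀ i, π (π i) = i := fun i => by
        have := congrArg (fun σ : Equiv.Perm (Fin n) => σ i) hp.1
        simpa [sq] using this
      rw [Finset.mem_filter, Finset.mem_finsuppAntidiag]
      refine ⟨⟨?_, Finset.subset_univ _⟩, ?_⟩
      · change ∑ e, (Finset.univ.filter fun i => s(f i, f (π i)) = e).card = n
        rw [← Finset.card_eq_sum_card_fiberwise (fun _ _ => Finset.mem_coe.2 (Finset.mem_univ _))]
        simp
      · intro e
        rw [Finsupp.equivFunOnFinite_symm_apply_apply]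
        induction e using Sym2.ind with
        | _ a b =>
        by_cases hab : a = b
        · left; simpa using hab
        · right
          rw [ecnt_off hπ f a b hab]
          refine ⟨by simp, ?_⟩
          by_cases h2 : a.val % 2 = b.val % 2
          · left
            intro x hx y hy
            rw [Sym2.mem_iff] at hx hy
            rcases hx with rfl | rfl <;> rcases hy with rfl | rfl <;> omega
          · right
            have := mcnt_opp hπ hp.2 a b h2
            omega
    · rintro ⟨π, f⟩ hp ⟨π', f'⟩ hp' heq
      simp only [Finset.mem_sigma, invSet, Finset.mem_filter, Finset.mem_univ, true_and] at hp hp'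
      have hπ : ∀ i, π (π i) = i := fun i => by
        have := congrArg (fun σ : Equiv.Perm (Fin n) => σ i) hp.1
        simpa [sq] using this
      have hπ' : ∀ i, π' (π' i) = i := fun i => by
        have := congrArg (fun σ : Equiv.Perm (Fin n) => σ i) hp'.1
        simpa [sq] using this
      have := Finsupp.equivFunOnFinite.symm.injective heq
      obtain ⟨h1, h2⟩ := pair_inj hπ hπ' hp.2 hp'.2 (fun e => congrFun this e)
      rw [h1, h2]
    · intro l hl
      rw [Finset.mem_filter, Finset.mem_finsuppAntidiag] at hl
      obtain ⟨π, f, h1, h2, h3⟩ := pair_surj l hl.1.1 hl.2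
      refine ⟨⟨π, f⟩, ?_, ?_⟩
      · simp only [Finset.mem_sigma, invSet, Finset.mem_filter, Finset.mem_univ, true_and]
        refine ⟨?_, h2⟩
        ext i; simp [sq, h1]
      · ext e; simp [h3]
  · intro l _
    rw [Finset.prod_ite_zero]
    simp [adm]
    congr

def LV (Q : ℕ → ℕ → Prop) {n m : ℕ} (f : Fin (n + 1) → Fin m) : Prop :=
  ∀ i : Fin n, f i.castSucc < f i.succ ∨
    (f i.castSucc = f i.succ ∧ Q (i.val + 1) (f i.castSucc).val)

lemma VV_iff_LV {s : ℕ → ℤ} {Q : ℕ → ℕ → Prop} {n m : ℕ} (π : Equiv.Perm (Fin (n + 1)))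
    (hQ : ∀ (i : Fin n) v, Q (i.val + 1) v ↔
      s v * ((π i.castSucc).val : ℤ) < s v * ((π i.succ).val : ℤ))
    (f : Fin (n + 1) → Fin m) : VV s π f ↔ LV Q f := by
  let r : Fin (n + 1) → Fin (n + 1) → Prop := fun i j => f i < f j ∨
    (f i = f j ∧ s (f i) * ((π i).val : ℤ) < s (f i) * ((π j).val : ℤ))
  have : IsTrans (Fin (n + 1)) r := ⟨by
    rintro i j k (h | ⟨h, h'⟩) (g | ⟨g, g'⟩)
    · exact Or.inl (h.trans g)
    · exact Or.inl (g ▸ h)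
    · exact Or.inl (h ▸ g)
    · refine Or.inr ⟨h.trans g, ?_⟩
      rw [h] at h' ⊢
      exact h'.trans g'⟩
  have key := Fin.liftFun_iff_succ r (f := id)
  constructor
  · intro h i
    rcases h i.castSucc i.succ (Fin.castSucc_lt_succ) with h | ⟨h, h'⟩
    · exact Or.inl h
    · exact Or.inr ⟨h, (hQ i _).2 h'⟩
  · intro h i j hij
    refine key.2 ?_ hij
    intro i
    rcases h i with h | ⟨h, h'⟩
    · exact Or.inl h
    · exact Or.inr ⟨h, (hQ i _).1 h'⟩

def cc (Q : ℕ → ℕ → Prop) : ℕ → ℕ → ℕ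
  | 0, _ => 1
  | n + 1, v => ∑ u ∈ Finset.range v, cc Q n u + if Q (n + 1) v then cc Q n v else 0

lemma LV_snoc (Q : ℕ → ℕ → Prop) {n m : ℕ} (g : Fin (n + 1) → Fin m) (v : Fin m) :
    LV Q (Fin.snoc g v : Fin (n + 1 + 1) → Fin m) ↔ LV Q g ∧
      (g (Fin.last n) < v ∨ (g (Fin.last n) = v ∧ Q (n + 1) v.val)) := by
  unfold LV
  rw [Fin.forall_fin_succ']
  refine and_congr ?_ ?_
  · apply forall_congr'
    intro i
    rw [← Fin.castSucc_succ, Fin.snoc_castSucc, Fin.snoc_castSucc]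
    simp
  · rw [Fin.snoc_castSucc, Fin.succ_last, Fin.snoc_last]
    simp only [Fin.val_last]
    constructor
    · rintro (h | ⟨h, h'⟩)
      · exact Or.inl h
      · exact Or.inr ⟨h, h ▸ h'⟩
    · rintro (h | ⟨h, h'⟩)
      · exact Or.inl h
      · exact Or.inr ⟨h, h ▸ h'⟩

lemma card_LV_last (Q : ℕ → ℕ → Prop) (n m : ℕ) (v : Fin m) :
    (Finset.univ.filter fun f : Fin (n + 1) → Fin m => LV Q f ∧ f (Fin.last n) = v).card
      = cc Q n v := by
  induction n generalizing v with
  | zero =>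
    rw [cc, Finset.card_eq_one]
    refine ⟨fun _ => v, ?_⟩
    ext f
    simp only [Finset.mem_filter, Finset.mem_univ, true_and, Finset.mem_singleton]
    constructor
    · rintro ⟨_, h⟩
      funext i
      rw [← h]; congr 1; apply Fin.ext; simp
    · rintro rfl
      exact ⟨fun i => i.elim0, rfl⟩
  | succ n ih =>
    have h1 : (Finset.univ.filter fun f : Fin (n + 1 + 1) → Fin m =>
        LV Q f ∧ f (Fin.last (n + 1)) = v).card
        = (Finset.univ.filter fun g : Fin (n + 1) → Fin m => LV Q g ∧
      (g (Fin.last n) < v ∨ (g (Fin.last n) = v ∧ Q (n + 1) v.val))).card := by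
      apply Finset.card_bij' (fun f _ => Fin.init f) (fun g _ => (Fin.snoc g v : Fin (n+1+1) → Fin m))
      · intro f hf
        simp only [Finset.mem_filter, Finset.mem_univ, true_and] at hf ⊢
        rw [← LV_snoc, ← hf.2, Fin.snoc_init_self]
        exact hf.1
      · intro g hg
        simp only [Finset.mem_filter, Finset.mem_univ, true_and] at hg ⊢
        rw [LV_snoc, Fin.snoc_last]
        exact ⟨hg, rfl⟩
      · intro f hf
        simp only [Finset.mem_filter, Finset.mem_univ, true_and] at hf ⊢
        rw [← hf.2, Fin.snoc_init_self]
      · intro g hg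
        exact Fin.init_snoc (α := fun _ => Fin m) v g
    rw [h1, cc]
    rw [Finset.card_eq_sum_card_fiberwise (f := fun g => g (Fin.last n)) (t := Finset.univ)
      (by intro x _; simp)]
    have h2 : ∀ u : Fin m, ((Finset.univ.filter fun g : Fin (n + 1) → Fin m => LV Q g ∧
      (g (Fin.last n) < v ∨ (g (Fin.last n) = v ∧ Q (n + 1) v.val))).filter
        (fun g => g (Fin.last n) = u)).card
        = (if u.val < v.val then cc Q n u else 0) +
          (if u = v then (if Q (n + 1) v then cc Q n v else 0) else 0) := by
      intro u
      rw [Finset.filter_filter]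
      by_cases hu : u < v ∨ (u = v ∧ Q (n + 1) v.val)
      · rw [Finset.filter_congr (q := fun g => LV Q g ∧ g (Fin.last n) = u), ih]
        · rcases hu with h | ⟨rfl, h⟩
          · have h' := h.ne
            have : u.val < v.val := h
            simp [this, h']
          · simp [h]
        · intro g _
          constructor
          · rintro ⟨⟨a, _⟩, b⟩; exact ⟨a, b⟩
          · rintro ⟨a, b⟩; exact ⟨⟨a, by rw [b]; exact hu⟩, b⟩
      · rw [Finset.filter_false_of_mem]
        · push Not at hu
          have : ¬ u.val < v.val := not_lt.2 hu.1
          by_cases huv : u = v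
          · simp [huv, hu.2 huv]
          · simp [this, huv]
        · rintro g _ ⟨⟨a, b⟩, c⟩
          rw [c] at b; exact hu b
    rw [Finset.sum_congr rfl (fun u _ => h2 u), Finset.sum_add_distrib]
    congr 1
    · rw [Fin.sum_univ_eq_sum_range (fun u => if u < v.val then cc Q n u else 0) m,
        ← Finset.sum_filter]
      congr 1
      ext u; simp; omega
    · simp

lemma card_LV (Q : ℕ → ℕ → Prop) (n m : ℕ) :
    (Finset.univ.filter fun f : Fin (n + 1) → Fin m => LV Q f).card
      = ∑ v ∈ Finset.range m, cc Q n v := by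
  rw [Finset.card_eq_sum_card_fiberwise (f := fun g => g (Fin.last n)) (t := Finset.univ)
      (by intro x _; simp), ← Fin.sum_univ_eq_sum_range]
  apply Finset.sum_congr rfl
  intro v _
  rw [Finset.filter_filter, card_LV_last]

open PowerSeries in
lemma mk_psum (a : ℕ → ℚ) :
    (1 - X) * PowerSeries.mk (fun v => ∑ u ∈ Finset.range v, a u) = X * PowerSeries.mk a := by
  ext k
  rw [sub_mul, one_mul, map_sub]
  cases k with
  | zero => simp
  | succ k => simp [coeff_succ_X_mul, Finset.sum_range_succ]

open PowerSeries in
lemma cc_gf (Q : ℕ → ℕ → Prop) (n : ℕ) :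
    (1 - X) * PowerSeries.mk (fun v => (cc Q (n + 1) v : ℚ))
      = X * PowerSeries.mk (fun v => (cc Q n v : ℚ))
        + (1 - X) * PowerSeries.mk (fun v => if Q (n + 1) v then (cc Q n v : ℚ) else 0) := by
  rw [← mk_psum, ← mul_add]
  congr 1
  ext k
  simp [cc]

open PowerSeries in
lemma mk_one' : (1 - X) * PowerSeries.mk (fun _ => (1 : ℚ)) = 1 := by
  rw [mul_comm]
  exact PowerSeries.mk_one_mul_one_sub_eq_one ℚ

def dcnt (D : ℕ → Prop) : ℕ → ℕ
  | 0 => 0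
  | n + 1 => dcnt D n + if D (n + 1) then 1 else 0

def chg (D : ℕ → Prop) : ℕ → ℕ
  | 0 => 0
  | n + 1 => chg D n + if (D n ↔ D (n + 1)) then 0 else 1

lemma chg_le (D : ℕ → Prop) (n : ℕ) : chg D n ≤ n := by
  induction n with
  | zero => simp [chg]
  | succ n ih => rw [chg]; split_ifs <;> omega

open PowerSeries in
lemma gf_des (D : ℕ → Prop) (n : ℕ) :
    (1 - X) ^ (n + 1) * PowerSeries.mk (fun v => (cc (fun i _ => ¬ D i) n v : ℚ))
      = X ^ dcnt D n := by
  induction n with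
  | zero => simpa [cc, dcnt] using mk_one'
  | succ n ih =>
    rw [pow_succ, mul_assoc, cc_gf, dcnt]
    by_cases h : D (n + 1)
    · simp only [h, not_true, if_false, if_true]
      rw [pow_succ X, ← ih]
      have : PowerSeries.mk (fun _ : ℕ => (0 : ℚ)) = 0 := by ext; simp
      rw [this]; ring
    · simp only [h, not_false_eq_true, if_false, if_true, add_zero]
      rw [← ih]; ring

def eps (p : Prop) : PowerSeries ℚ := if p then -1 else 1

open PowerSeries in
lemma proj_eq (p : Prop) (b : ℕ → ℚ) :
    2 * PowerSeries.mk (fun v => if (v % 2 = 1 ↔ p) then b v else 0)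
      = PowerSeries.mk b + eps p * rescale (-1 : ℚ) (PowerSeries.mk b) := by
  ext k
  rw [show (2 : PowerSeries ℚ) = C 2 from (map_ofNat C 2).symm]
  unfold eps
  rw [coeff_C_mul]
  rcases Nat.even_or_odd k with hk | hk
  · have : k % 2 = 0 := by rw [Nat.even_iff] at hk; omega
    by_cases hp : p <;> simp [hp, this, coeff_rescale, hk.neg_one_pow] <;> ring
  · have : k % 2 = 1 := by rw [Nat.odd_iff] at hk; omega
    by_cases hp : p <;> simp [hp, this, coeff_rescale, hk.neg_one_pow] <;> ring

lemma eps_chg (D : ℕ → Prop) (h0 : ¬ D 0) (n : ℕ) : (-1) ^ chg D n = eps (D n) := by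
  induction n with
  | zero => simp [chg, eps, h0]
  | succ n ih =>
    rw [chg, pow_add, ih]
    unfold eps
    by_cases h1 : D n <;> by_cases h2 : D (n + 1) <;> simp [h1, h2]

open PowerSeries in
lemma gf_alt (D : ℕ → Prop) (h0 : ¬ D 0) (n : ℕ) :
    (1 - X ^ 2) ^ (n + 1) * PowerSeries.mk (fun v => (cc (fun i v => (v % 2 = 1 ↔ D i)) n v : ℚ))
      = (1 + X) * ((2 * X) ^ chg D n * (1 + X ^ 2) ^ (n - chg D n)) := by
  induction n with
  | zero =>
    simp only [cc, chg]
    have := mk_one'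
    linear_combination (exp := 1) (1 + X) * this
  | succ n ih =>
    set ℓ := PowerSeries.mk (fun v => (cc (fun i v => (v % 2 = 1 ↔ D i)) n v : ℚ)) with hl
    set K : PowerSeries ℚ := (2 * X) ^ chg D n * (1 + X ^ 2) ^ (n - chg D n) with hK
    have h2 := proj_eq (D (n + 1)) (fun v => (cc (fun i v => (v % 2 = 1 ↔ D i)) n v : ℚ))
    rw [← hl] at h2
    have h3 := congrArg (rescale (-1 : ℚ)) ih
    have hX : rescale (-1 : ℚ) X = -X := by
      rw [rescale_X]; simp
    simp only [hK, map_mul, map_pow, map_sub, map_add, map_one, hX, map_ofNat] at h3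
    rw [show (2 * -X : PowerSeries ℚ) = (-1) * (2 * X) by ring, mul_pow, eps_chg D h0,
      neg_sq, mul_assoc (eps (D n)), ← hK] at h3
    set τ := rescale (-1 : ℚ) ℓ with ht
    set pr := PowerSeries.mk (fun v => if (v % 2 = 1 ↔ D (n + 1)) then
      (cc (fun i v => (v % 2 = 1 ↔ D i)) n v : ℚ) else 0) with hp
    have h1 : (1 - X) * PowerSeries.mk
        (fun v => (cc (fun i v => (v % 2 = 1 ↔ D i)) (n + 1) v : ℚ)) = X * ℓ + (1 - X) * pr := by
      rw [cc_gf, hp]; congr!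
    have hle := chg_le D n
    have two : (2 : PowerSeries ℚ) ≠ 0 := by
      rw [show (2 : PowerSeries ℚ) = C 2 from (map_ofNat C 2).symm]
      intro h
      have := congrArg (coeff 0) h
      simp at this
    apply mul_left_cancel₀ two
    have h4 : 2 * ((1 - X ^ 2) ^ (n + 1) * pr) = (1 + X) * K + eps (D (n+1)) * ((1 + -X) * (eps (D n) * K)) := by
      linear_combination (1 - X ^ 2) ^ (n + 1) * h2 + ih + eps (D (n+1)) * h3
    have h5 : 2 * ((1 - X ^ 2) ^ (n + 1 + 1) * PowerSeries.mk
        (fun v => (cc (fun i v => (v % 2 = 1 ↔ D i)) (n + 1) v : ℚ))) =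
        (1 + X) * (2 * X * ((1 + X) * K) + (1 - X) * ((1 + X) * K + eps (D (n+1)) * ((1 + -X) * (eps (D n) * K)))) := by
      linear_combination 2 * (1 + X) * (1 - X ^ 2) ^ (n + 1) * h1 + 2 * (1 + X) * X * ih
        + (1 + X) * (1 - X) * h4
    rw [h5, chg]
    by_cases hD : (D n ↔ D (n + 1))
    · have he : eps (D (n+1)) * eps (D n) = 1 := by
        unfold eps; by_cases h : D n <;> simp [h, ← hD]
      rw [if_pos hD, add_zero, show n + 1 - chg D n = (n - chg D n) + 1 by omega, pow_succ, ← mul_assoc ((2 * X) ^ _), ← hK]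
      linear_combination (1 + X) * (1 - X) * (1 - X) * K * he
    · have he : eps (D (n+1)) * eps (D n) = -1 := by
        unfold eps; by_cases h : D n <;> by_cases h' : D (n + 1) <;> simp [h, h'] at hD ⊢
      rw [if_neg hD, show n + 1 - (chg D n + 1) = n - chg D n by omega, pow_succ]
      have : (2 * X) ^ chg D n * (2 * X) * (1 + X ^ 2) ^ (n - chg D n) = 2 * X * K := by
        rw [hK]; ring
      rw [this]
      linear_combination (1 + X) * (1 - X) * (1 - X) * K * he

def dd (n : ℕ) (π : Equiv.Perm (Fin n)) (i : ℕ) : Prop := oneLine n π (i + 1) < oneLine n π i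

lemma dd_iff {n : ℕ} (π : Equiv.Perm (Fin (n + 1))) (i : Fin n) :
    dd (n + 1) π (i.val + 1) ↔ π i.succ < π i.castSucc := by
  unfold dd oneLine
  have := i.isLt
  rw [dif_pos ⟨by omega, by omega⟩, dif_pos ⟨by omega, by omega⟩, Fin.lt_def, Nat.add_lt_add_iff_right]
  rfl

lemma dd_zero (n : ℕ) (π : Equiv.Perm (Fin n)) : ¬ dd n π 0 := by
  unfold dd oneLine; simp

lemma oneLine_ne {n : ℕ} (π : Equiv.Perm (Fin n)) {i : ℕ} (h : 1 ≤ i) (hn : i ≤ n) :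
    oneLine n π (i - 1) ≠ oneLine n π i := by
  unfold oneLine
  rw [dif_pos (show 1 ≤ i ∧ i ≤ n from ⟨h, hn⟩)]
  split_ifs with h'
  · intro e
    have e' := π.injective (Fin.ext (Nat.add_right_cancel e))
    rw [Fin.mk.injEq] at e'
    omega
  · omega

lemma dcnt_eq (D : ℕ → Prop) (n : ℕ) : ((Finset.Icc 1 n).filter D).card = dcnt D n := by
  induction n with
  | zero => simp [dcnt]
  | succ n ih =>
    rw [dcnt, ← ih, Finset.card_filter, Finset.card_filter, Finset.sum_Icc_succ_top (by omega)]

lemma chg_eq (D : ℕ → Prop) (n : ℕ) :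
    ((Finset.Icc 1 n).filter fun i => ¬ (D (i - 1) ↔ D i)).card = chg D n := by
  induction n with
  | zero => simp [chg]
  | succ n ih =>
    rw [chg, ← ih, Finset.card_filter, Finset.card_filter, Finset.sum_Icc_succ_top (by omega)]
    congr 1
    simp only [Nat.add_sub_cancel]
    by_cases h : (D n ↔ D (n + 1)) <;> simp [h]

lemma des_eq {n : ℕ} (π : Equiv.Perm (Fin (n + 1))) : des (n + 1) π = dcnt (dd (n + 1) π) n := by
  rw [← dcnt_eq]
  unfold des dd
  rw [Nat.add_sub_cancel]
  congr!

lemma udr_eq {n : ℕ} (π : Equiv.Perm (Fin (n + 1))) : udr (n + 1) π = chg (dd (n + 1) π) n + 1 := by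
  rw [← chg_eq]
  unfold udr lpk pval
  rw [Nat.add_sub_cancel, ← Finset.card_union_of_disjoint]
  · congr 2
    ext i
    simp only [Finset.mem_union, Finset.mem_filter, Finset.mem_Icc]
    constructor
    · rintro (⟨⟨h1, h2⟩, h3, h4⟩ | ⟨⟨h1, h2⟩, h3, h4⟩)
      · refine ⟨⟨h1, h2⟩, ?_⟩
        unfold dd
        rw [Nat.sub_add_cancel h1]
        intro h
        exact absurd (h.2 h4) (by omega)
      · refine ⟨⟨by omega, h2⟩, ?_⟩
        unfold dd
        rw [Nat.sub_add_cancel (by omega)]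
        intro h
        exact absurd (h.1 h3) (by omega)
    · rintro ⟨⟨h1, h2⟩, h⟩
      have hne := oneLine_ne π h1 (by omega : i ≤ n + 1)
      have hne' := oneLine_ne π (i := i + 1) (by omega) (by omega : i + 1 ≤ n + 1)
      rw [Nat.add_sub_cancel] at hne'
      have h0 := dd_zero (n + 1) π
      by_cases hi : i = 1
      · subst hi
        left
        rw [Nat.sub_self] at h ⊢
        have : dd (n + 1) π 1 := by tauto
        refine ⟨⟨h1, h2⟩, ?_, this⟩
        unfold dd at h0
        rw [Nat.sub_self] at hne
        simp only [Nat.zero_add] at h0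
        omega
      · unfold dd at h
        rw [Nat.sub_add_cancel h1] at h
        by_cases h5 : oneLine (n + 1) π i < oneLine (n + 1) π (i - 1)
        · right
          refine ⟨⟨by omega, h2⟩, h5, ?_⟩
          have : ¬ (oneLine (n + 1) π (i + 1) < oneLine (n + 1) π i) := by tauto
          omega
        · left
          refine ⟨⟨by omega, h2⟩, by omega, ?_⟩
          tauto
  · rw [Finset.disjoint_left]
    intro i hi hi'
    simp only [Finset.mem_filter] at hi hi'
    omega

def NN (s : ℕ → ℤ) {n : ℕ} (π : Equiv.Perm (Fin n)) (m : ℕ) : ℕ :=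
  (Finset.univ.filter fun f : Fin n → Fin m => VV s π f).card

lemma NN_one {n : ℕ} (π : Equiv.Perm (Fin (n + 1))) (m : ℕ) :
    NN (fun _ => 1) π m = ∑ v ∈ Finset.range m, cc (fun i _ => ¬ dd (n + 1) π i) n v := by
  rw [← card_LV]
  unfold NN
  congr 1
  apply Finset.filter_congr
  intro f _
  apply VV_iff_LV
  intro i v
  rw [dd_iff]
  have : π i.castSucc ≠ π i.succ := π.injective.ne (Fin.castSucc_lt_succ).ne
  rw [← Fin.val_ne_iff] at this
  rw [Fin.lt_def]
  omega

lemma NN_sg {n : ℕ} (π : Equiv.Perm (Fin (n + 1))) (m : ℕ) :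
    NN sg π m = ∑ v ∈ Finset.range m, cc (fun i v => (v % 2 = 1 ↔ dd (n + 1) π i)) n v := by
  rw [← card_LV]
  unfold NN
  congr 1
  apply Finset.filter_congr
  intro f _
  apply VV_iff_LV
  intro i v
  rw [dd_iff]
  have : π i.castSucc ≠ π i.succ := π.injective.ne (Fin.castSucc_lt_succ).ne
  rw [← Fin.val_ne_iff] at this
  rw [Fin.lt_def]
  unfold sg
  split_ifs <;> omega

open PowerSeries in
lemma NN_one_gf {n : ℕ} (π : Equiv.Perm (Fin (n + 1))) :
    (1 - X) ^ (n + 1 + 1) * PowerSeries.mk (fun m => (NN (fun _ => 1) π m : ℚ))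
      = X ^ (des (n + 1) π + 1) := by
  simp only [NN_one, Nat.cast_sum]
  rw [pow_succ, mul_assoc, mk_psum, mul_left_comm, gf_des, des_eq]
  ring

open PowerSeries in
lemma NN_sg_gf {n : ℕ} (π : Equiv.Perm (Fin (n + 1))) :
    2 * (1 - X ^ 2) ^ (n + 1 + 1) * PowerSeries.mk (fun m => (NN sg π m : ℚ))
      = (1 + X) ^ 2 * (2 ^ udr (n + 1) π * X ^ udr (n + 1) π
        * (1 + X ^ 2) ^ (n + 1 - udr (n + 1) π)) := by
  simp only [NN_sg, Nat.cast_sum]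
  have h1 := mk_psum (fun v => (cc (fun i v => (v % 2 = 1 ↔ dd (n + 1) π i)) n v : ℚ))
  have h2 := gf_alt (dd (n + 1) π) (dd_zero _ _) n
  rw [udr_eq, Nat.add_sub_add_right, ← mul_pow, pow_succ (2 * X)]
  linear_combination 2 * (1 - X ^ 2) ^ (n + 1) * (1 + X) * h1 + 2 * X * (1 + X) * h2

lemma sum_NN (k m : ℕ) : ∑ σ : Equiv.Perm (Fin k), NN (fun _ => 1) σ m = m ^ k := by
  unfold NN
  rw [← Finset.card_sigma]
  have : m ^ k = (Finset.univ : Finset (Fin k → Fin m)).card := by simp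
  rw [this]
  apply Finset.card_bij' (fun p _ => p.2 ∘ p.1.symm)
    (fun g _ => (⟨Tuple.sort g, g ∘ Tuple.sort g⟩ : Σ _ : Equiv.Perm (Fin k), (Fin k → Fin m)))
  · intro p _; simp
  · intro g _
    simp only [Finset.mem_sigma, Finset.mem_univ, Finset.mem_filter, true_and]
    have h := (Tuple.eq_sort_iff (f := g) (σ := Tuple.sort g)).1 rfl
    intro i j hij
    rcases (h.1 hij.le).lt_or_eq with h' | h'
    · exact Or.inl h'
    · refine Or.inr ⟨h', ?_⟩
      have := h.2 i j hij h'
      rw [Fin.lt_def] at this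
      simp only [one_mul]
      omega
  · rintro ⟨σ, f⟩ hp
    simp only [Finset.mem_sigma, Finset.mem_univ, Finset.mem_filter, true_and] at hp
    have h : σ = Tuple.sort (f ∘ σ.symm) := by
      rw [Tuple.eq_sort_iff]
      constructor
      · have := VV_mono hp
        convert this using 1
        funext i; simp
      · intro i j hij he
        simp at he
        rcases hp i j hij with h | h
        · exact absurd he h.ne
        · rw [Fin.lt_def]; simp only [one_mul] at h; omega
    have h2 : (f ∘ σ.symm) ∘ σ = f := by funext i; simp
    dsimp only
    rw [← h, h2]
  · intro g _
    funext i; simp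

open PowerSeries in
lemma eulerian_gf (k : ℕ) (hk : 1 ≤ k) : ((eulerianA k : Polynomial ℚ) : PowerSeries ℚ)
    = (1 - X) ^ (k + 1) * PowerSeries.mk (fun j => (j : ℚ) ^ k) := by
  obtain ⟨k, rfl⟩ : ∃ k', k = k' + 1 := ⟨k - 1, by omega⟩
  have : PowerSeries.mk (fun j => (j : ℚ) ^ (k + 1)) = ∑ σ : Equiv.Perm (Fin (k + 1)),
      PowerSeries.mk (fun m => (NN (fun _ => 1) σ m : ℚ)) := by
    ext m
    rw [map_sum]
    simp only [coeff_mk]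
    rw [← Nat.cast_sum, sum_NN]; simp
  rw [this, Finset.mul_sum, eulerianA, ← Polynomial.coeToPowerSeries.ringHom_apply, map_sum]
  apply Finset.sum_congr rfl
  intro σ _
  rw [NN_one_gf]
  simp

open PowerSeries in
lemma coe_comp_sq (p : Polynomial ℚ) :
    ((p.comp (Polynomial.X ^ 2) : Polynomial ℚ) : PowerSeries ℚ)
      = PowerSeries.expand 2 two_ne_zero (p : PowerSeries ℚ) := by
  rw [← Polynomial.expand_eq_comp_X_pow]
  ext k
  rw [Polynomial.coeff_coe, Polynomial.coeff_expand (by norm_num), PowerSeries.coeff_expand]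
  simp

open PowerSeries in
lemma A_part (k : ℕ) (hk : 1 ≤ k) :
    2 ^ k * (((eulerianA k).comp (Polynomial.X ^ 2) : Polynomial ℚ) : PowerSeries ℚ)
      = (1 - X ^ 2) ^ (k + 1) * PowerSeries.mk (fun i => if i % 2 = 0 then (i : ℚ) ^ k else 0) := by
  rw [coe_comp_sq, eulerian_gf k hk, map_mul, map_pow, map_sub, map_one, expand_X, mul_left_comm]
  congr 1
  rw [show (2 : PowerSeries ℚ) ^ k = C (2 ^ k) by rw [map_pow, map_ofNat]]
  ext i
  rw [coeff_C_mul, coeff_mk, coeff_expand]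
  by_cases h : i % 2 = 0
  · rw [if_pos h, if_pos (Nat.dvd_of_mod_eq_zero h), coeff_mk, ← mul_pow]
    congr 1
    obtain ⟨j, rfl⟩ := Nat.dvd_of_mod_eq_zero h
    simp
  · rw [if_neg h, if_neg (by omega), mul_zero]

open PowerSeries in
lemma B_part (B : ℕ → Polynomial ℚ)
    (hB : ∀ m : ℕ, ((B m : PowerSeries ℚ))
      = (1 - PowerSeries.X) ^ (m + 1)
          * PowerSeries.mk (fun k => ((2 * k + 1 : ℕ) : ℚ) ^ m)) (k : ℕ) :
    X * (((B k).comp (Polynomial.X ^ 2) : Polynomial ℚ) : PowerSeries ℚ)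
      = (1 - X ^ 2) ^ (k + 1) * PowerSeries.mk (fun i => if i % 2 = 0 then 0 else (i : ℚ) ^ k) := by
  rw [coe_comp_sq, hB, map_mul, map_pow, map_sub, map_one, expand_X, mul_left_comm]
  congr 1
  ext i
  cases i with
  | zero => simp
  | succ i =>
  rw [coeff_succ_X_mul, coeff_mk, coeff_expand]
  by_cases h : i % 2 = 0
  · rw [if_pos (Nat.dvd_of_mod_eq_zero h), coeff_mk, if_neg (by omega : ¬ (i + 1) % 2 = 0)]
    obtain ⟨j, rfl⟩ := Nat.dvd_of_mod_eq_zero h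
    simp
  · rw [if_pos (by omega : (i + 1) % 2 = 0), if_neg (by omega : ¬ 2 ∣ i)]

lemma wM_even (m : ℕ) (h : m % 2 = 0) :
    wM m = fun p => if 4 ∣ p then 0 else (m : ℚ) ^ Nat.gcd p 2 := by
  funext p
  unfold wM
  have h3 : Nat.gcd p 2 = Nat.gcd (p % 2) 2 := by rw [Nat.gcd_comm, Nat.gcd_rec]
  rw [h3]
  by_cases h1 : p % 2 = 1
  · rw [if_pos h1, if_neg (by omega), h1]; simp
  · have h2 : p % 2 = 0 := by omega
    rw [if_neg h1, h2]
    by_cases h4 : p % 4 = 2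
    · rw [if_pos h4, if_neg (by omega)]; simp
    · rw [if_neg h4, if_neg (by omega), if_pos (by omega)]

lemma wM_odd (m : ℕ) (h : m % 2 = 1) :
    wM m = fun p => (m : ℚ) ^ (if 4 ∣ p then 0 else Nat.gcd p 2) := by
  funext p
  unfold wM
  have h3 : Nat.gcd p 2 = Nat.gcd (p % 2) 2 := by rw [Nat.gcd_comm, Nat.gcd_rec]
  rw [h3]
  by_cases h1 : p % 2 = 1
  · rw [if_pos h1, if_neg (by omega), h1]; simp
  · have h2 : p % 2 = 0 := by omega
    rw [if_neg h1, h2]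
    by_cases h4 : p % 4 = 2
    · rw [if_pos h4, if_neg (by omega)]; simp
    · rw [if_neg h4, if_pos h, if_pos (by omega), pow_zero]

lemma main_count (n : ℕ) (hn : 1 ≤ n) (m : ℕ) :
    (n.factorial : ℚ) * ∑ π ∈ invSet n, (NN sg π m : ℚ)
      = ∑ k ∈ Finset.Icc 1 n, (cnk n k : ℚ) * (if m % 2 = 0 then (m : ℚ) ^ k else 0)
        + ∑ k ∈ Finset.range (n + 1), (dnk n k : ℚ) * (if m % 2 = 0 then 0 else (m : ℚ) ^ k) := by
  have h1 : ∑ π ∈ invSet n, (NN sg π m : ℚ) = Wsum (wM m) n / n.factorial := by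
    rw [← prodF_eq, ← partC, Nat.cast_sum]
    rfl
  rw [h1, mul_div_cancel₀ _ (by exact_mod_cast n.factorial_ne_zero)]
  by_cases h : m % 2 = 0
  · rw [wM_even m h, W_C n hn]; simp [h]
  · rw [wM_odd m (by omega), W_D n hn]; simp [h]

open PowerSeries in
lemma main_ps (n : ℕ) (hn : 1 ≤ n) (B : ℕ → Polynomial ℚ)
    (hB : ∀ m : ℕ, ((B m : PowerSeries ℚ))
      = (1 - PowerSeries.X) ^ (m + 1)
          * PowerSeries.mk (fun k => ((2 * k + 1 : ℕ) : ℚ) ^ m)) :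
    (n.factorial : PowerSeries ℚ) * (1 + X) ^ 2
        * ∑ π ∈ invSet n,
            (2 : PowerSeries ℚ) ^ udr n π * X ^ udr n π
              * (1 + X ^ 2) ^ (n - udr n π)
      = 2 * ∑ k ∈ Finset.Icc 1 n,
            (cnk n k : PowerSeries ℚ) * 2 ^ k *
              (((eulerianA k).comp (Polynomial.X ^ 2) : Polynomial ℚ) : PowerSeries ℚ)
              * (1 - X ^ 2) ^ (n - k)
        + 2 * X * ∑ k ∈ Finset.range (n + 1),
            (dnk n k : PowerSeries ℚ) *
              (((B k).comp (Polynomial.X ^ 2) : Polynomial ℚ) : PowerSeries ℚ)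
              * (1 - X ^ 2) ^ (n - k) := by
  have e1 : (n.factorial : PowerSeries ℚ) * (1 + X) ^ 2
        * ∑ π ∈ invSet n,
            (2 : PowerSeries ℚ) ^ udr n π * X ^ udr n π
              * (1 + X ^ 2) ^ (n - udr n π)
      = 2 * (1 - X ^ 2) ^ (n + 1) * ((n.factorial : PowerSeries ℚ) *
          ∑ π ∈ invSet n, PowerSeries.mk (fun m => (NN sg π m : ℚ))) := by
    obtain ⟨n, rfl⟩ : ∃ k', n = k' + 1 := ⟨n - 1, by omega⟩
    rw [mul_assoc, mul_left_comm (2 * _)]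
    congr 1
    rw [Finset.mul_sum, Finset.mul_sum]
    apply Finset.sum_congr rfl
    intro π _
    rw [NN_sg_gf]
  have e2 : ∑ k ∈ Finset.Icc 1 n,
            (cnk n k : PowerSeries ℚ) * 2 ^ k *
              (((eulerianA k).comp (Polynomial.X ^ 2) : Polynomial ℚ) : PowerSeries ℚ)
              * (1 - X ^ 2) ^ (n - k) = (1 - X ^ 2) ^ (n + 1) *
        ∑ k ∈ Finset.Icc 1 n, (cnk n k : PowerSeries ℚ) *
          PowerSeries.mk (fun i => if i % 2 = 0 then (i : ℚ) ^ k else 0) := by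
    rw [Finset.mul_sum]
    apply Finset.sum_congr rfl
    intro k hk
    rw [Finset.mem_Icc] at hk
    rw [mul_assoc (cnk n k : PowerSeries ℚ), A_part k hk.1,
      show n + 1 = (k + 1) + (n - k) by omega, pow_add]
    ring
  have e3 : X * ∑ k ∈ Finset.range (n + 1),
            (dnk n k : PowerSeries ℚ) *
              (((B k).comp (Polynomial.X ^ 2) : Polynomial ℚ) : PowerSeries ℚ)
              * (1 - X ^ 2) ^ (n - k) = (1 - X ^ 2) ^ (n + 1) *
        ∑ k ∈ Finset.range (n + 1), (dnk n k : PowerSeries ℚ) *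
          PowerSeries.mk (fun i => if i % 2 = 0 then 0 else (i : ℚ) ^ k) := by
    rw [Finset.mul_sum, Finset.mul_sum]
    apply Finset.sum_congr rfl
    intro k hk
    rw [Finset.mem_range] at hk
    rw [mul_assoc (dnk n k : PowerSeries ℚ), mul_left_comm X, ← mul_assoc X, B_part B hB,
      show n + 1 = (k + 1) + (n - k) by omega, pow_add]
    ring
  rw [e1, mul_assoc 2 X, e2, e3, ← mul_add, ← mul_add, mul_assoc]
  congr 2
  ext m
  have key := main_count n hn m
  have hc : ∀ (a : ℕ) (f : PowerSeries ℚ), coeff m ((a : PowerSeries ℚ) * f) = (a : ℚ) * coeff m f := by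
    intro a f
    rw [← coeff_C_mul, map_natCast]
  rw [hc, map_add, map_sum, map_sum, map_sum]
  simp only [hc, coeff_mk]
  exact key

theorem stmt16 (n : ℕ) (hn : 1 ≤ n) (B : ℕ → Polynomial ℚ)
    (hB : ∀ m : ℕ, ((B m : PowerSeries ℚ))
      = (1 - PowerSeries.X) ^ (m + 1)
          * PowerSeries.mk (fun k => ((2 * k + 1 : ℕ) : ℚ) ^ m)) :
    (n.factorial : Polynomial ℚ) * (1 + Polynomial.X) ^ 2
        * ∑ π ∈ invSet n,
            (2 : Polynomial ℚ) ^ udr n π * Polynomial.X ^ udr n π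
              * (1 + Polynomial.X ^ 2) ^ (n - udr n π)
      = 2 * ∑ k ∈ Finset.Icc 1 n,
            (cnk n k : Polynomial ℚ) * 2 ^ k * (eulerianA k).comp (Polynomial.X ^ 2)
              * (1 - Polynomial.X ^ 2) ^ (n - k)
        + 2 * Polynomial.X * ∑ k ∈ Finset.range (n + 1),
            (dnk n k : Polynomial ℚ) * (B k).comp (Polynomial.X ^ 2)
              * (1 - Polynomial.X ^ 2) ^ (n - k) := by
  apply Polynomial.coe_injective ℚ
  have h := main_ps n hn B hB
  simp only [← Polynomial.coeToPowerSeries.ringHom_apply] at h ⊢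
  simp only [map_mul, map_add, map_sub, map_pow, map_sum, map_one, map_ofNat, map_natCast]
  simp only [Polynomial.coeToPowerSeries.ringHom_apply, Polynomial.coe_X] at h ⊢
  exact h

end
end

section
/- Let n ≥ 1 and let 𝔇_n denote the set of derangements of [n]. Then the following identity of formal power series in ℚ[[t]] holds: Σ_{π ∈ 𝔇_n} t^{des(π)+1} = (1−t)^{n+1} · Σ_{k ≥ 0} t^k ( Σ_{j=0}^{n} (−1)^j binom(k,j) k^{n−j} ). (Here binom(k,j) = 0 when j > k, so each coefficient is a finite integer.) -/
open scoped Classical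

noncomputable section

section lists
variable {α : Type*} [LinearOrder α]

set_option linter.unusedSectionVars false
set_option linter.unusedSimpArgs false

def Bal17 (v : α) (A B : List α) : Prop :=
  A.countP (fun x => v < x) = B.countP (fun x => x < v)

def FV17 (l : List α) (v : α) : Prop := ∃ A B, l = A ++ v :: B ∧ Bal17 v A B

lemma split_aux17 (v : α) (l : List α) : ∀ c, c ≤ l.countP (fun x => x < v) →
    ∃ A B, l = A ++ B ∧ c + A.countP (fun x => v < x) = B.countP (fun x => x < v) := by
  induction l with
  | nil => intro c hc; exact ⟨[], [], rfl, by simpa using hc⟩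
  | cons x l ih =>
    intro c hc
    rcases hc.eq_or_lt with h | h
    · exact ⟨[], x :: l, rfl, by simpa using h⟩
    · rw [List.countP_cons] at h
      rcases lt_trichotomy x v with hx | hx | hx
      · simp only [hx, decide_true, if_true] at h
        obtain ⟨A, B, rfl, h2⟩ := ih c (by omega)
        exact ⟨x :: A, B, rfl, by simp [List.countP_cons, hx.not_gt, h2]⟩
      · subst hx
        simp only [lt_irrefl, decide_false, Bool.false_eq_true, if_false] at h
        obtain ⟨A, B, rfl, h2⟩ := ih c (by omega)
        exact ⟨x :: A, B, rfl, by simp [List.countP_cons, h2]⟩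
      · simp only [hx.not_gt, decide_false, Bool.false_eq_true, if_false] at h
        obtain ⟨A, B, rfl, h2⟩ := ih (c+1) (by omega)
        exact ⟨x :: A, B, rfl, by simp [List.countP_cons, hx]; omega⟩

lemma exists_split17 (v : α) (l : List α) : ∃ A B, l = A ++ B ∧ Bal17 v A B := by
  obtain ⟨A, B, h, h2⟩ := split_aux17 v l 0 (Nat.zero_le _)
  exact ⟨A, B, h, by simpa [Bal17] using h2⟩

lemma all_eq17 (v : α) (C : List α) (h1 : C.countP (fun x => v < x) = 0)
    (h2 : C.countP (fun x => x < v) = 0) : C = List.replicate C.length v := by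
  rw [List.countP_eq_zero] at h1 h2
  rw [List.eq_replicate_iff]
  refine ⟨rfl, fun b hb => ?_⟩
  have := h1 b hb
  have := h2 b hb
  simp at *
  order

lemma ins_unique17 (v : α) (A B A' B' : List α) (h : A ++ B = A' ++ B')
    (hb : Bal17 v A B) (hb' : Bal17 v A' B') : A ++ v :: B = A' ++ v :: B' := by
  have key : ∀ A C B : List α, Bal17 v A (C ++ B) → Bal17 v (A ++ C) B →
      A ++ v :: (C ++ B) = (A ++ C) ++ v :: B := by
    intro A C B h1 h2
    simp only [Bal17, List.countP_append] at h1 h2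
    have := all_eq17 v C (by omega) (by omega)
    rw [this]
    simp only [List.append_assoc, List.append_cancel_left_eq]
    rw [← List.cons_append, ← List.replicate_succ, List.replicate_succ']
    simp
  rcases List.append_eq_append_iff.1 h with ⟨C, rfl, rfl⟩ | ⟨C, rfl, rfl⟩
  · exact key _ _ _ hb hb'
  · exact (key _ _ _ hb' hb).symm

lemma del_unique17 (v : α) (A B A' B' : List α) (h : A ++ v :: B = A' ++ v :: B')
    (hb : Bal17 v A B) (hb' : Bal17 v A' B') : A ++ B = A' ++ B' := by
  have key : ∀ A C B : List α, Bal17 v A (C ++ v :: B) → Bal17 v (A ++ v :: C) B →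
      A ++ (C ++ v :: B) = (A ++ v :: C) ++ B := by
    intro A C B h1 h2
    simp only [Bal17, List.countP_append, List.countP_cons, lt_irrefl, decide_false,
      Bool.false_eq_true, if_false] at h1 h2
    have := all_eq17 v C (by omega) (by omega)
    rw [this]
    simp only [List.append_assoc, List.append_cancel_left_eq]
    rw [← List.replicate_succ, List.replicate_succ']
    simp
  rcases List.append_eq_append_iff.1 h with ⟨C, rfl, h2⟩ | ⟨C, rfl, h2⟩
  · rcases C with _ | ⟨x, C⟩
    · simp at h2; simp [h2]
    · simp at h2; obtain ⟨rfl, rfl⟩ := h2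
      exact key _ _ _ hb hb'
  · rcases C with _ | ⟨x, C⟩
    · simp at h2; simp [h2]
    · simp at h2; obtain ⟨rfl, rfl⟩ := h2
      exact (key _ _ _ hb' hb).symm

lemma countP_mono17 (p q : α → Prop) [DecidablePred p] [DecidablePred q] (l : List α)
    (h : ∀ x, p x → q x) : l.countP p ≤ l.countP q :=
  List.countP_mono_left (by simpa using fun x _ => h x)

lemma other17 (u v : α) (huv : u ≠ v) (A B : List α) (hb : Bal17 v A B) :
    FV17 (A ++ v :: B) u ↔ FV17 (A ++ B) u := by
  have L : ∀ A' C B : List α, Bal17 v (A' ++ u :: C) B → 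
     (Bal17 u A' (C ++ v :: B) ↔ Bal17 u A' (C ++ B)) := by
    intro A C B h
    simp only [Bal17, List.countP_append, List.countP_cons] at h ⊢
    by_cases hlt : v < u
    · simp only [hlt, decide_true, if_true] at h ⊢
      have h1 := countP_mono17 (fun x => u < x) (fun x => v < x) A (fun x hx => hlt.trans hx)
      have h2 := countP_mono17 (fun x => x < v) (fun x => x < u) B (fun x hx => hx.trans hlt)
      constructor <;> intro <;> omega
    · simp [hlt]
  have R : ∀ A C B' : List α, Bal17 v A (C ++ u :: B') → 
     (Bal17 u (A ++ v :: C) B' ↔ Bal17 u (A ++ C) B') := by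
    intro A C B h
    simp only [Bal17, List.countP_append, List.countP_cons] at h ⊢
    by_cases hlt : u < v
    · simp only [hlt, decide_true, if_true] at h ⊢
      have h1 := countP_mono17 (fun x => v < x) (fun x => u < x) A (fun x hx => hlt.trans hx)
      have h2 := countP_mono17 (fun x => x < u) (fun x => x < v) B (fun x hx => hx.trans hlt)
      constructor <;> intro <;> omega
    · simp [hlt]
  constructor
  · rintro ⟨A', B', h, h'⟩
    rcases List.append_eq_append_iff.1 h with ⟨C, rfl, h2⟩ | ⟨C, rfl, h2⟩
    · rcases C with _ | ⟨x, C⟩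
      · simp at h2; exact absurd h2.1.symm huv
      · simp at h2; obtain ⟨rfl, rfl⟩ := h2
        exact ⟨A ++ C, B', by simp, (R _ _ _ hb).1 h'⟩
    · rcases C with _ | ⟨x, C⟩
      · simp at h2; exact absurd h2.1 huv
      · simp at h2; obtain ⟨rfl, rfl⟩ := h2
        exact ⟨A', C ++ B, by simp, (L _ _ _ hb).1 h'⟩
  · rintro ⟨A', B', h, h'⟩
    rcases List.append_eq_append_iff.1 h with ⟨C, rfl, rfl⟩ | ⟨C, rfl, h2⟩
    · exact ⟨A ++ v :: C, B', by simp, (R _ _ _ hb).2 h'⟩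
    · rcases C with _ | ⟨x, C⟩
      · simp at h2; subst h2
        refine ⟨A' ++ [v], B', by simp, (R _ [] _ ?_).2 (by simpa using h')⟩
        simpa using hb
      · simp at h2; obtain ⟨rfl, rfl⟩ := h2
        exact ⟨A', C ++ v :: B, by simp, (L _ _ _ hb).2 h'⟩

def LL17 (α : Type*) [Fintype α] (n : ℕ) : Finset (List α) :=
  Finset.univ.map ⟨fun w : Fin n → α => List.ofFn w, List.ofFn_injective⟩

lemma mem_LL17 [Fintype α] (n : ℕ) (l : List α) : l ∈ LL17 α n ↔ l.length = n := by
  simp only [LL17, Finset.mem_map, Finset.mem_univ, true_and, Function.Embedding.coeFn_mk]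
  constructor
  · rintro ⟨w, rfl⟩; simp
  · rintro rfl; exact ⟨l.get, by simp⟩

lemma card_LL17 [Fintype α] (n : ℕ) (P : List α → Prop) [DecidablePred P]
    [DecidablePred fun w : Fin n → α => P (List.ofFn w)] :
    ((LL17 α n).filter P).card
      = (Finset.univ.filter fun w : Fin n → α => P (List.ofFn w)).card := by
  rw [LL17, Finset.filter_map, Finset.card_map]
  congr!

lemma step17 [Fintype α] (n : ℕ) (v : α) (S : Finset α) (hv : v ∉ S) :
    ((LL17 α (n+1)).filter fun l => ∀ u ∈ insert v S, FV17 l u).card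
    = ((LL17 α n).filter fun l => ∀ u ∈ S, FV17 l u).card := by
  symm
  choose A B hAB hbal using exists_split17 v
  apply Finset.card_bij (fun l _ => A l ++ v :: B l)
  · intro l hl
    simp only [Finset.mem_filter, mem_LL17] at hl ⊢
    refine ⟨?_, ?_⟩
    · rw [← hl.1]; conv_rhs => rw [hAB l]
      simp; omega
    · intro u hu
      rcases Finset.mem_insert.1 hu with rfl | hu'
      · exact ⟨_, _, rfl, hbal _⟩
      · rw [other17 u v (by rintro rfl; exact hv hu') _ _ (hbal _), ← hAB]
        exact hl.2 u hu'
  · intro l _ l' _ h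
    rw [hAB l, hAB l']
    exact del_unique17 v _ _ _ _ h (hbal _) (hbal _)
  · intro l hl
    simp only [Finset.mem_filter, mem_LL17] at hl
    obtain ⟨A', B', rfl, hb⟩ := hl.2 v (Finset.mem_insert_self _ _)
    refine ⟨A' ++ B', ?_, ins_unique17 v _ _ _ _ (hAB _).symm (hbal _) hb⟩
    simp only [Finset.mem_filter, mem_LL17]
    refine ⟨by have := hl.1; simp at this ⊢; omega, fun u hu => ?_⟩
    rw [← other17 u v (by rintro rfl; exact hv hu) _ _ hb]
    exact hl.2 u (Finset.mem_insert_of_mem hu)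

lemma count17 [Fintype α] (S : Finset α) : ∀ n, 
    ((LL17 α n).filter fun l => ∀ u ∈ S, FV17 l u).card
    = if S.card ≤ n then Fintype.card α ^ (n - S.card) else 0 := by
  induction S using Finset.induction_on with
  | empty => intro n; rw [card_LL17 n (fun l => ∀ u ∈ (∅ : Finset α), FV17 l u)]; simp
  | insert v S hv ih =>
    intro n
    rcases n with _ | n
    · simp only [Finset.card_insert_of_notMem hv]
      simp only [Nat.le_zero, Nat.add_eq_zero_iff, one_ne_zero, and_false, if_false]
      rw [Finset.card_eq_zero, Finset.filter_eq_empty_iff]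
      intro l hl h
      obtain ⟨A, B, rfl, _⟩ := h v (Finset.mem_insert_self _ _)
      rw [mem_LL17] at hl
      simp at hl
    · rw [step17 n v S hv, ih, Finset.card_insert_of_notMem hv]
      simp

lemma total17 [Fintype α] (n : ℕ) :
    (((Finset.univ.filter fun w : Fin n → α => ∀ v, ¬ FV17 (List.ofFn w) v).card : ℕ) : ℚ)
    = ∑ j ∈ Finset.range (n + 1),
        (-1 : ℚ) ^ j * ((Fintype.card α).choose j : ℚ) * (Fintype.card α : ℚ) ^ (n - j) := by
  have h1 : ∀ w : Fin n → α, (if ∀ v, ¬ FV17 (List.ofFn w) v then (1:ℚ) else 0)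
      = ∑ S : Finset α, if ∀ u ∈ S, FV17 (List.ofFn w) u then (-1 : ℚ) ^ S.card else 0 := by
    intro w
    have := Finset.sum_powerset_neg_one_pow_card
      (x := Finset.univ.filter fun v => FV17 (List.ofFn w) v)
    have h2 := congrArg (Int.cast : ℤ → ℚ) this
    push_cast at h2
    rw [← Finset.sum_filter]
    have e : (Finset.univ.filter fun S : Finset α => ∀ u ∈ S, FV17 (List.ofFn w) u)
       = (Finset.univ.filter fun v => FV17 (List.ofFn w) v).powerset := by
      ext S; simp [Finset.subset_iff]
    rw [e, h2]
    simp [Finset.filter_eq_empty_iff]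
  rw [Finset.card_filter]
  push_cast
  rw [Finset.sum_congr rfl (fun w _ => h1 w), Finset.sum_comm]
  have h3 : ∀ S : Finset α, (∑ w : Fin n → α,
      if ∀ u ∈ S, FV17 (List.ofFn w) u then (-1 : ℚ) ^ S.card else 0)
      = (fun j => if j ≤ n then (-1 : ℚ) ^ j * (Fintype.card α : ℚ) ^ (n - j) else 0) S.card := by
    intro S
    rw [← Finset.sum_filter, Finset.sum_const,
      ← card_LL17 n (fun l => ∀ u ∈ S, FV17 l u), count17]
    simp only
    split_ifs
    · simp [mul_comm]
    · simp
  rw [Finset.sum_congr rfl (fun w _ => h3 w), ← Finset.powerset_univ, Finset.sum_powerset_apply_card (fun j => if j ≤ n then (-1 : ℚ) ^ j * (Fintype.card α : ℚ) ^ (n - j) else 0), Finset.card_univ]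
  have h4 : ∀ N, ∑ m ∈ Finset.range N, (Fintype.card α).choose m •
      (if m ≤ n then (-1 : ℚ) ^ m * (Fintype.card α : ℚ) ^ (n - m) else 0) 
      = ∑ m ∈ Finset.range N, if m ≤ n then (-1 : ℚ) ^ m * ((Fintype.card α).choose m : ℚ) * (Fintype.card α : ℚ) ^ (n - m) else 0 := by
    intro N
    apply Finset.sum_congr rfl
    intro m _
    split_ifs
    · simp; ring
    · simp
  rw [h4]
  have h5 : ∑ j ∈ Finset.range (n + 1),
        (-1 : ℚ) ^ j * ((Fintype.card α).choose j : ℚ) * (Fintype.card α : ℚ) ^ (n - j)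
       = ∑ m ∈ Finset.range (n+1), if m ≤ n then (-1 : ℚ) ^ m * ((Fintype.card α).choose m : ℚ) * (Fintype.card α : ℚ) ^ (n - m) else 0 := by
    apply Finset.sum_congr rfl
    intro m hm
    rw [if_pos (by simp at hm; omega)]
  rw [h5]
  have h6 : ∀ N, (∀ m ≥ N, (if m ≤ n then (-1 : ℚ) ^ m * ((Fintype.card α).choose m : ℚ) * (Fintype.card α : ℚ) ^ (n - m) else 0) = 0) → ∀ M, N ≤ M → 
     ∑ m ∈ Finset.range N, (if m ≤ n then (-1 : ℚ) ^ m * ((Fintype.card α).choose m : ℚ) * (Fintype.card α : ℚ) ^ (n - m) else 0) = ∑ m ∈ Finset.range M, (if m ≤ n then (-1 : ℚ) ^ m * ((Fintype.card α).choose m : ℚ) * (Fintype.card α : ℚ) ^ (n - m) else 0) := by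
    intro N hN M hM
    apply Finset.sum_subset (Finset.range_subset_range.2 hM)
    intro m _ hm
    exact hN m (by simpa using hm)
  rw [h6 _ ?_ _ (le_max_left _ (n+1)), h6 (n+1) ?_ _ (le_max_right (Fintype.card α + 1) _)]
  · intro m hm; rw [if_neg (by omega)]
  · intro m hm; rw [Nat.choose_eq_zero_of_lt (by omega)]; simp

end lists

section fixedpts
variable {α : Type*} [LinearOrder α]

lemma sort_symm_lt17 {n : ℕ} (w : Fin n → α) (p q : Fin n) :
    (Tuple.sort w).symm q < (Tuple.sort w).symm p ↔ (w q < w p ∨ (w q = w p ∧ q < p)) := by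
  have h := (Tuple.eq_sort_iff (f := w) (σ := Tuple.sort w)).1 rfl
  have key : ∀ p q, (Tuple.sort w).symm q < (Tuple.sort w).symm p →
      (w q < w p ∨ (w q = w p ∧ q < p)) := by
    intro p q hlt
    have h1 := h.1 hlt.le
    have h2 := h.2 _ _ hlt
    simp at h1 h2
    rcases h1.lt_or_eq with h3 | h3
    · exact Or.inl h3
    · exact Or.inr ⟨h3, h2 h3⟩
  refine ⟨key p q, fun hh => ?_⟩
  by_contra hc
  rcases (not_lt.1 hc).lt_or_eq with h3 | h3
  · rcases key q p h3 with h4 | h4 <;> rcases hh with h5 | h5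
    · order
    · order
    · order
    · order
  · have := (Tuple.sort w).symm.injective h3
    subst this
    simp at hh

lemma sort_symm_val17 {n : ℕ} (w : Fin n → α) (p : Fin n) :
    ((Tuple.sort w).symm p : ℕ) = ∑ q, if (w q < w p ∨ (w q = w p ∧ q < p)) then 1 else 0 := by
  rw [← Finset.card_filter]
  have : (Finset.univ.filter fun q => (w q < w p ∨ (w q = w p ∧ q < p)))
      = (Finset.Iio ((Tuple.sort w).symm p)).map (Tuple.sort w).toEmbedding := by
    ext q
    simp [← sort_symm_lt17, Finset.mem_map_equiv]
  rw [this, Finset.card_map, Fin.card_Iio]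

lemma countP_ofFn17 (P : α → Prop) [DecidablePred P] : ∀ {n : ℕ} (f : Fin n → α),
    (List.ofFn f).countP P = ∑ i, if P (f i) then 1 else 0 := by
  intro n
  induction n with
  | zero => intro f; simp
  | succ n ih =>
    intro f
    rw [List.ofFn_succ, List.countP_cons, ih, Fin.sum_univ_succ]
    simp [add_comm]

lemma fix_iff17 (p b : ℕ) (w : Fin (p + (b + 1)) → α) :
    Tuple.sort w (Fin.natAdd p 0) = Fin.natAdd p 0 ↔
    Bal17 (w (Fin.natAdd p 0)) (List.ofFn (fun i : Fin p => w (Fin.castAdd _ i)))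
      (List.ofFn (fun i : Fin b => w (Fin.natAdd p i.succ))) := by
  rw [Bal17, countP_ofFn17, countP_ofFn17]
  have h0 : Tuple.sort w (Fin.natAdd p 0) = Fin.natAdd p 0 ↔
      ((Tuple.sort w).symm (Fin.natAdd p 0) : ℕ) = p := by
    constructor
    · intro h
      rw [← h, Equiv.symm_apply_apply]; simp
    · intro h
      have : (Tuple.sort w).symm (Fin.natAdd p 0) = Fin.natAdd p 0 := by
        ext; simpa using h
      rw [Equiv.symm_apply_eq] at this
      exact this.symm
  rw [h0, sort_symm_val17, Fin.sum_univ_add, Fin.sum_univ_succ]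
  have h1 : ∀ i : Fin p, (if (w (Fin.castAdd (b+1) i) < w (Fin.natAdd p 0) ∨
      (w (Fin.castAdd (b+1) i) = w (Fin.natAdd p 0) ∧ Fin.castAdd (b+1) i < Fin.natAdd p 0))
      then 1 else 0) + (if w (Fin.natAdd p 0) < w (Fin.castAdd (b+1) i) then 1 else 0) = 1 := by
    intro i
    have : Fin.castAdd (b+1) i < Fin.natAdd p 0 := by
      rw [Fin.lt_def]; simp
    simp only [this, and_true, ← le_iff_lt_or_eq]
    by_cases h : w (Fin.castAdd (b+1) i) ≤ w (Fin.natAdd p 0)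
    · simp [h, h.not_gt]
    · simp [h, not_le.1 h]
  have h2 := Finset.sum_congr rfl (fun i (_ : i ∈ Finset.univ) => h1 i)
  rw [Finset.sum_add_distrib] at h2
  simp only [Finset.sum_const, Finset.card_univ, Fintype.card_fin, smul_eq_mul, mul_one] at h2
  have h3 : ∀ i : Fin b, (if (w (Fin.natAdd p i.succ) < w (Fin.natAdd p 0) ∨
      (w (Fin.natAdd p i.succ) = w (Fin.natAdd p 0) ∧ Fin.natAdd p i.succ < Fin.natAdd p 0))
      then 1 else 0) = (if w (Fin.natAdd p i.succ) < w (Fin.natAdd p 0) then 1 else 0) := by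
    intro i
    have : ¬ Fin.natAdd p i.succ < Fin.natAdd p 0 := by
      rw [Fin.lt_def]; simp
    simp only [this, and_false, or_false]
  rw [Finset.sum_congr rfl (fun i _ => h3 i)]
  simp only [lt_irrefl, and_false, or_false, if_false]
  omega

lemma ofFn_split17 (p b : ℕ) (w : Fin (p + (b + 1)) → α) :
    List.ofFn w = List.ofFn (fun i : Fin p => w (Fin.castAdd _ i)) ++
     w (Fin.natAdd p 0) :: List.ofFn (fun i : Fin b => w (Fin.natAdd p i.succ)) := by
  rw [List.ofFn_add, List.ofFn_succ]
  rfl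

lemma fix_FV17 {n : ℕ} (w : Fin n → α) :
    (∀ x, Tuple.sort w x ≠ x) ↔ ∀ v, ¬ FV17 (List.ofFn w) v := by
  constructor
  · rintro h v ⟨A, B, hl, hb⟩
    have hn : n = A.length + (B.length + 1) := by
      have := congrArg List.length hl
      simpa using this
    obtain ⟨p, hp⟩ : ∃ p, p = A.length := ⟨_, rfl⟩
    obtain ⟨b, hb'⟩ : ∃ p, p = B.length := ⟨_, rfl⟩
    rw [← hp, ← hb'] at hn
    subst hn
    rw [ofFn_split17] at hl
    obtain ⟨h1, h2⟩ := List.append_inj hl (by simp [hp])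
    rw [List.cons.injEq] at h2
    apply h (Fin.natAdd p 0)
    rw [fix_iff17, h1, h2.1, h2.2]
    exact hb
  · rintro h ⟨x, hx⟩ hfix
    obtain ⟨b, rfl⟩ : ∃ b, n = x + (b + 1) := ⟨n - x - 1, by omega⟩
    have e : (⟨x, hx⟩ : Fin (x + (b+1))) = Fin.natAdd x 0 := by ext; simp
    rw [e, fix_iff17] at hfix
    exact h _ ⟨_, _, ofFn_split17 x b w, hfix⟩

end fixedpts

section counting

lemma card_strictMono17 (n m : ℕ) :
    (Finset.univ.filter fun f : Fin n → Fin m => StrictMono f).card = m.choose n := by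
  have : ((Finset.univ : Finset (Fin m)).powersetCard n).card = m.choose n := by simp
  rw [← this]
  apply Finset.card_bij (fun f _ => Finset.univ.image f)
  · intro f hf
    simp only [Finset.mem_filter, Finset.mem_univ, true_and] at hf
    rw [Finset.mem_powersetCard]
    exact ⟨Finset.subset_univ _, by rw [Finset.card_image_of_injective _ hf.injective]; simp⟩
  · intro f hf g hg h
    simp only [Finset.mem_filter, Finset.mem_univ, true_and] at hf hg
    apply (StrictMono.range_inj hf hg).1
    have := congrArg (fun s : Finset (Fin m) => (s : Set (Fin m))) h
    simpa using this
  · intro s hs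
    rw [Finset.mem_powersetCard] at hs
    refine ⟨s.orderEmbOfFin hs.2, ?_, ?_⟩
    · simp [OrderEmbedding.strictMono]
    · apply Finset.coe_injective
      simp

/-- number of non-descents before i -/
def ee17 (D : ℕ → Prop) (i : ℕ) : ℕ := ((Finset.range i).filter fun j => ¬ D j).card

lemma ee_succ17 (D : ℕ → Prop) (i : ℕ) : ee17 D (i+1) = ee17 D i + if D i then 0 else 1 := by
  unfold ee17
  rw [Finset.range_add_one, Finset.filter_insert]
  split_ifs with h
  · simp
  · rw [Finset.card_insert_of_notMem (by simp)]

lemma card_compat17 (N k : ℕ) (D : ℕ → Prop) :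
    (Finset.univ.filter fun a : Fin (N+1) → Fin k =>
      ∀ i : Fin N, a i.castSucc ≤ a i.succ ∧ (D i → a i.castSucc < a i.succ)).card
    = (k + ee17 D N).choose (N+1) := by
  have hmono : ∀ i j, i ≤ j → ee17 D i ≤ ee17 D j := fun i j h => by
    apply monotone_nat_of_le_succ _ h
    intro n; rw [ee_succ17]; omega
  have hle : ∀ i, ee17 D i ≤ i := by
    intro i
    induction i with
    | zero => simp [ee17]
    | succ i ih => rw [ee_succ17]; split_ifs <;> omega
  rw [← card_strictMono17]
  apply Finset.card_bij (fun a _ => fun i => ⟨a i + ee17 D i, by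
    have := hmono i N (by omega)
    omega⟩)
  · intro a ha
    simp only [Finset.mem_filter, Finset.mem_univ, true_and] at ha ⊢
    rw [Fin.strictMono_iff_lt_succ]
    intro i
    obtain ⟨h1, h2⟩ := ha i
    rw [Fin.le_def] at h1
    rw [Fin.lt_def] at h2 ⊢
    simp only [Fin.val_castSucc, Fin.val_succ, ee_succ17]
    split_ifs with h
    · have := h2 h; omega
    · omega
  · intro a _ b _ h
    funext i
    have := congrFun h i
    simp only [Fin.mk.injEq, add_left_inj] at this
    exact Fin.ext this
  · intro b hb
    simp only [Finset.mem_filter, Finset.mem_univ, true_and] at hb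
    have hb' := hb
    rw [Fin.strictMono_iff_lt_succ] at hb'
    have hge : ∀ i : Fin (N+1), ee17 D i ≤ b i := by
      intro i
      refine (hle i).trans ?_
      induction i using Fin.induction with
      | zero => simp
      | succ i ih =>
        have := hb' i
        rw [Fin.lt_def] at this
        simp only [Fin.val_castSucc, Fin.val_succ] at *
        omega
    have hmon : Monotone (fun i : Fin (N+1) => (b i : ℕ) - ee17 D i) := by
      rw [Fin.monotone_iff_le_succ]
      intro i
      have := hb' i
      rw [Fin.lt_def] at this
      simp only [Fin.val_castSucc, Fin.val_succ, ee_succ17]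
      split_ifs <;> omega
    have hlt : ∀ i : Fin (N+1), (b i : ℕ) - ee17 D i < k := by
      intro i
      have h1 := hmon (Fin.le_last i)
      simp only [Fin.val_last] at h1
      have h2 := (b (Fin.last N)).2
      have h3 := hge (Fin.last N)
      simp only [Fin.val_last] at h3
      omega
    refine ⟨fun i => ⟨b i - ee17 D i, hlt i⟩, ?_, ?_⟩
    · simp only [Finset.mem_filter, Finset.mem_univ, true_and]
      intro i
      have := hb' i
      have h3 := hge i.castSucc
      rw [Fin.lt_def] at this
      rw [Fin.lt_def, Fin.le_def]
      simp only [Fin.val_castSucc, Fin.val_succ, ee_succ17] at *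
      split_ifs with h
      · exact ⟨by omega, fun _ => by omega⟩
      · exact ⟨by omega, fun h' => absurd h' h⟩
    · funext i
      ext
      simp only
      have := hge i
      omega

def DD17 (n : ℕ) (π : Equiv.Perm (Fin n)) (i : ℕ) : Prop :=
  oneLine n π (i + 2) < oneLine n π (i + 1)

lemma des_eq17 (N : ℕ) (π : Equiv.Perm (Fin (N+1))) :
    des (N+1) π + ee17 (DD17 (N+1) π) N = N := by
  have h1 : des (N+1) π = ((Finset.range N).filter fun j => DD17 (N+1) π j).card := by
    unfold des DD17
    symm
    apply Finset.card_bij (fun j _ => j + 1)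
    · intro j hj
      simp at hj ⊢
      exact ⟨by omega, hj.2⟩
    · intro i _ j _ h
      omega
    · intro j hj
      simp at hj
      obtain ⟨⟨h1, h2⟩, h3⟩ := hj
      obtain ⟨j, rfl⟩ : ∃ i, j = i + 1 := ⟨j - 1, by omega⟩
      refine ⟨j, ?_, rfl⟩
      simp
      exact ⟨by omega, h3⟩
  rw [h1, ee17, Finset.card_filter_add_card_filter_not, Finset.card_range]

lemma DD_iff17 (N : ℕ) (π : Equiv.Perm (Fin (N+1))) (i : Fin N) :
    DD17 (N+1) π i ↔ π i.succ < π i.castSucc := by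
  have h1 : oneLine (N+1) π (i + 2) = π i.succ + 1 := by
    unfold oneLine
    rw [dif_pos (by omega)]
    rfl
  have h2 : oneLine (N+1) π (i + 1) = π i.castSucc + 1 := by
    unfold oneLine
    rw [dif_pos (by omega)]
    rfl
  rw [DD17, h1, h2, Fin.lt_def]
  omega

lemma sort_compat17 (N k : ℕ) (π : Equiv.Perm (Fin (N+1))) (w : Fin (N+1) → Fin k) :
    Tuple.sort w = π ↔ ∀ i : Fin N, (w ∘ π) i.castSucc ≤ (w ∘ π) i.succ ∧
      (DD17 (N+1) π i → (w ∘ π) i.castSucc < (w ∘ π) i.succ) := by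
  rw [eq_comm, Tuple.eq_sort_iff]
  constructor
  · rintro ⟨h1, h2⟩ i
    refine ⟨h1 i.castSucc_lt_succ.le, fun hD => ?_⟩
    refine lt_of_le_of_ne (h1 i.castSucc_lt_succ.le) fun h => ?_
    have := h2 _ _ i.castSucc_lt_succ h
    rw [DD_iff17] at hD
    exact absurd hD this.not_gt
  · intro h
    have hs : StrictMono (fun i => toLex ((w ∘ π) i, π i)) := by
      rw [Fin.strictMono_iff_lt_succ]
      intro i
      rw [Prod.Lex.toLex_lt_toLex]
      obtain ⟨h1, h2⟩ := h i
      rcases h1.lt_or_eq with h3 | h3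
      · exact Or.inl h3
      · refine Or.inr ⟨h3, ?_⟩
        have h4 : ¬ DD17 (N+1) π i := fun hD => (h2 hD).ne h3
        rw [DD_iff17, not_lt] at h4
        refine lt_of_le_of_ne h4 fun h5 => ?_
        exact i.castSucc_lt_succ.ne (π.injective h5)
    refine ⟨?_, ?_⟩
    · rw [Fin.monotone_iff_le_succ]
      exact fun i => (h i).1
    · intro i j hij heq
      have := hs hij
      rw [Prod.Lex.toLex_lt_toLex] at this
      rcases this with h | h
      · exact absurd heq h.ne
      · exact h.2

lemma card_sort17 (N k : ℕ) (π : Equiv.Perm (Fin (N+1))) :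
    (Finset.univ.filter fun w : Fin (N+1) → Fin k => Tuple.sort w = π).card
    = (k + ee17 (DD17 (N+1) π) N).choose (N+1) := by
  rw [← card_compat17]
  apply Finset.card_bij (fun w _ => w ∘ π)
  · intro w hw
    simp only [Finset.mem_filter, Finset.mem_univ, true_and] at hw ⊢
    exact (sort_compat17 N k π w).1 hw
  · intro w _ w' _ h
    exact π.surjective.injective_comp_right h
  · intro a ha
    simp only [Finset.mem_filter, Finset.mem_univ, true_and] at ha
    have e : (a ∘ π.symm) ∘ π = a := by funext; simp
    refine ⟨a ∘ π.symm, ?_, e⟩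
    simp only [Finset.mem_filter, Finset.mem_univ, true_and]
    rw [sort_compat17, e]
    exact ha

lemma series17 (N : ℕ) (π : Equiv.Perm (Fin (N+1))) :
    (PowerSeries.X : PowerSeries ℚ) ^ (des (N+1) π + 1) = (1 - PowerSeries.X) ^ (N + 1 + 1) *
      PowerSeries.mk (fun k =>
        (((Finset.univ.filter fun w : Fin (N+1) → Fin k => Tuple.sort w = π).card : ℕ) : ℚ)) := by
  have h := PowerSeries.mk_add_choose_mul_one_sub_pow_eq_one ℚ (d := N+1)
  have e : PowerSeries.mk (fun k =>
        (((Finset.univ.filter fun w : Fin (N+1) → Fin k => Tuple.sort w = π).card : ℕ) : ℚ))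
      = PowerSeries.X ^ (des (N+1) π + 1) *
        PowerSeries.mk (fun m => (Nat.choose (N + 1 + m) (N+1) : ℚ)) := by
    ext k
    rw [PowerSeries.coeff_mk, card_sort17, PowerSeries.coeff_X_pow_mul']
    have := des_eq17 N π
    split_ifs with hk
    · rw [PowerSeries.coeff_mk]
      congr 2
      omega
    · rw [Nat.choose_eq_zero_of_lt (by omega)]; simp
  rw [e, mul_comm, mul_assoc, h, mul_one]

end counting

theorem stmt17 (n : ℕ) (hn : 1 ≤ n) :
    (∑ π ∈ (Finset.univ.filter fun π : Equiv.Perm (Fin n) => ∀ x, π x ≠ x),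
        (PowerSeries.X : PowerSeries ℚ) ^ (des n π + 1))
      = (1 - PowerSeries.X) ^ (n + 1)
          * PowerSeries.mk (fun k =>
              ∑ j ∈ Finset.range (n + 1),
                (-1 : ℚ) ^ j * (k.choose j : ℚ) * (k : ℚ) ^ (n - j)) := by
  obtain ⟨N, rfl⟩ : ∃ N, n = N + 1 := ⟨n - 1, by omega⟩
  rw [Finset.sum_congr rfl (fun π _ => series17 N π), ← Finset.mul_sum]
  congr 1
  ext k
  rw [map_sum, PowerSeries.coeff_mk]
  simp only [PowerSeries.coeff_mk]
  have h := total17 (α := Fin k) (N+1)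
  simp only [Fintype.card_fin] at h
  rw [← h, ← Nat.cast_sum]
  congr 1
  rw [Finset.card_eq_sum_card_fiberwise (f := fun w => Tuple.sort w)
    (t := Finset.univ.filter fun π : Equiv.Perm (Fin (N+1)) => ∀ x, π x ≠ x)]
  · apply Finset.sum_congr rfl
    intro π hπ
    rw [Finset.filter_filter]
    congr 1
    ext w
    simp only [Finset.mem_filter, Finset.mem_univ, true_and] at hπ ⊢
    constructor
    · rintro rfl
      exact ⟨(fix_FV17 w).1 hπ, rfl⟩
    · exact fun h => h.2
  · intro w hw
    have hw' : ∀ v, ¬ FV17 (List.ofFn w) v := by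
      simpa only [Finset.coe_filter, Set.mem_setOf_eq, Finset.mem_univ, true_and] using hw
    exact Finset.mem_filter.2 ⟨Finset.mem_univ _, (fix_FV17 w).2 hw'⟩

end
end

section
/- Let n ≥ 1 and let λ = (1^{m₁} 2^{m₂} ⋯ n^{m_n}) be a partition of n (so Σ_i i·m_i = n). For integers i ≥ 1 and k ≥ 0, define f_{i,k} = (1/i) Σ_{d ∣ i} μ(d) k^{i/d}, a nonnegative integer. Then the following identity of formal power series in ℚ[[t]] holds: Σ_{π ∈ S_n, cycle type(π) = λ} t^{des(π)+1} = (1−t)^{n+1} · Σ_{k ≥ 0} t^k · Π_{1 ≤ i ≤ n, m_i ≥ 1} binom(f_{i,k} + m_i − 1, m_i). -/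
open scoped Classical

noncomputable section

lemma ps_aux (n d : ℕ) (hn : 1 ≤ n) : (PowerSeries.X : PowerSeries ℚ)^(d+1)
    = (1-PowerSeries.X)^(n+1) * PowerSeries.mk (fun k => ((n+k-1-d).choose n : ℚ)) := by
  have h1 : PowerSeries.mk (fun k => ((n+k-1-d).choose n : ℚ))
      = PowerSeries.X^(d+1) * PowerSeries.mk (fun k => ((n+k).choose n : ℚ)) := by
    ext k
    rw [PowerSeries.coeff_X_pow_mul', PowerSeries.coeff_mk]
    split_ifs with h
    · rw [PowerSeries.coeff_mk]; congr 2; omega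
    · rw [Nat.choose_eq_zero_of_lt (by omega)]; simp
  have h2 := PowerSeries.mk_one_pow_eq_mk_choose_add ℚ n
  rw [h1, ← h2, mul_left_comm, ← mul_pow, mul_comm (1 - _), PowerSeries.mk_one_mul_one_sub_eq_one]
  simp

def Compat {n k : ℕ} (π : Equiv.Perm (Fin n)) (w : Fin n → Fin k) : Prop :=
  ∀ i j, i < j → w i ≤ w j ∧ (w i = w j → π i < π j)

lemma card_strictMono (n M : ℕ) : Nat.card {g : Fin n → Fin M // StrictMono g} = M.choose n := by
  have : Nat.card {g : Fin n → Fin M // StrictMono g} = Nat.card {s : Finset (Fin M) // s.card = n} := by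
    refine Nat.card_congr (Equiv.ofBijective (fun g => ⟨Finset.univ.image g.1, ?_⟩) ⟨?_, ?_⟩)
    · rw [Finset.card_image_of_injective _ g.2.injective]; simp
    · rintro ⟨g, hg⟩ ⟨g', hg'⟩ h
      simp only [Subtype.mk.injEq] at h
      have hc : (Finset.univ.image g).card = n := by
        rw [Finset.card_image_of_injective _ hg.injective]; simp
      have h1 := Finset.orderEmbOfFin_unique hc (f := g) (by simp) hg
      have h2 := Finset.orderEmbOfFin_unique hc (f := g') (by simp [h]) hg'
      exact Subtype.ext (h1.trans h2.symm)
    · rintro ⟨s, hs⟩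
      refine ⟨⟨s.orderEmbOfFin hs, (s.orderEmbOfFin hs).strictMono⟩, ?_⟩
      simp
  rw [this, Nat.card_eq_fintype_card, Fintype.card_finset_len, Fintype.card_fin]

lemma card_compat (n k : ℕ) (hn : 1 ≤ n) (π : Equiv.Perm (Fin n)) :
    Nat.card {w : Fin n → Fin k // Compat π w} = (n + k - 1 - des n π).choose n := by
  obtain ⟨N, rfl⟩ : ∃ N, n = N + 1 := ⟨n - 1, by omega⟩
  set D : ℕ → Prop := fun j => oneLine (N+1) π (j+2) < oneLine (N+1) π (j+1) with hD
  set nd : ℕ → ℕ := fun i => ((Finset.range i).filter (fun j => ¬ D j)).card with hnd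
  have nd_succ : ∀ i, nd (i+1) = nd i + if D i then 0 else 1 := by
    intro i
    simp only [hnd, Finset.range_add_one, Finset.filter_insert]
    split_ifs with h <;> simp_all
  have nd_le : ∀ i, nd i ≤ i := fun i => (Finset.card_filter_le _ _).trans (by simp)
  have nd_mono : Monotone nd := monotone_nat_of_le_succ (fun i => by rw [nd_succ]; omega)
  have hdes : des (N+1) π + nd N = N := by
    have h1 : des (N+1) π = ((Finset.range N).filter (fun j => D j)).card := by
      unfold des
      refine (Finset.card_bij (fun j _ => j + 1) ?_ ?_ ?_).symm
      · intro j hj; simp [hD] at hj ⊢; exact ⟨by omega, hj.2⟩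
      · intro a _ b _ h; simpa using h
      · intro b hb; simp at hb
        refine ⟨b - 1, ?_, by omega⟩
        obtain ⟨c, rfl⟩ : ∃ c, b = c + 1 := ⟨b - 1, by omega⟩
        simp [hD]; exact ⟨by omega, hb.2⟩
    rw [h1, hnd]
    simpa using Finset.card_filter_add_card_filter_not (s := Finset.range N) D
  have hDπ : ∀ i : Fin N, D i ↔ π i.succ < π i.castSucc := by
    intro i
    have : i.1 + 1 ≤ N := i.2
    have h1 : oneLine (N+1) π (i+2) = (π i.succ).1 + 1 := by
      unfold oneLine; rw [dif_pos (by omega)]; congr 3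
    have h2 : oneLine (N+1) π (i+1) = (π i.castSucc).1 + 1 := by
      unfold oneLine; rw [dif_pos (by omega)]; congr 3
    simp only [hD, h1, h2, Fin.lt_def]; omega
  have key : ∀ w : Fin (N+1) → Fin k, Compat π w ↔ StrictMono (fun i : Fin (N+1) => (w i).1 + nd i) := by
    intro w
    constructor
    · intro h
      rw [Fin.strictMono_iff_lt_succ]
      intro i
      have := h i.castSucc i.succ i.castSucc_lt_succ
      simp only [Fin.val_succ, Fin.val_castSucc, nd_succ]
      rw [Fin.le_def] at this
      split_ifs with hd
      · rw [hDπ] at hd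
        have : w i.castSucc ≠ w i.succ := fun e => absurd (this.2 e) (not_lt.2 hd.le)
        rw [Ne, Fin.ext_iff] at this
        omega
      · omega
    · intro h
      have step : ∀ i : Fin N, w i.castSucc ≤ w i.succ ∧ (w i.castSucc = w i.succ → π i.castSucc < π i.succ) := by
        intro i
        have := h i.castSucc_lt_succ
        simp only [Fin.val_succ, Fin.val_castSucc, nd_succ] at this
        rw [Fin.le_def]
        split_ifs at this with hd
        · refine ⟨by omega, fun e => ?_⟩
          rw [e] at this; omega
        · refine ⟨by omega, fun e => ?_⟩
          rw [hDπ, not_lt] at hd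
          exact lt_of_le_of_ne hd (fun e => by
            have := π.injective e
            simp [Fin.ext_iff] at this)
      have hs : StrictMono (fun i => toLex (w i, π i)) := by
        rw [Fin.strictMono_iff_lt_succ]
        intro i
        rw [Prod.Lex.toLex_lt_toLex]
        rcases (step i).1.lt_or_eq with h | h
        · exact Or.inl h
        · exact Or.inr ⟨h, (step i).2 h⟩
      intro i j hij
      have := hs hij
      rw [Prod.Lex.toLex_lt_toLex] at this
      rcases this with h | h
      · exact ⟨h.le, fun e => absurd e h.ne⟩
      · exact ⟨h.1.le, fun _ => h.2⟩
  have hM : N + 1 + k - 1 - des (N+1) π = k + nd N := by omega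
  rw [hM, ← card_strictMono]
  refine Nat.card_congr (Equiv.ofBijective
    (fun w => ⟨fun i => ⟨(w.1 i).1 + nd i, ?_⟩, ?_⟩) ⟨?_, ?_⟩)
  · have := (w.1 i).2
    have := nd_mono (show i.1 ≤ N by omega)
    omega
  · exact (key w.1).1 w.2
  · rintro ⟨w, hw⟩ ⟨w', hw'⟩ h
    apply Subtype.ext
    funext i
    have := congrFun (Subtype.mk.inj h) i
    simp at this
    exact Fin.ext this
  · rintro ⟨g, hg⟩
    have hge : ∀ i : Fin (N+1), nd i ≤ (g i).1 := by
      intro i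
      have hi : i.1 ≤ (g i).1 := by
        induction i using Fin.induction with
        | zero => simp
        | succ i ih =>
          have : (g i.castSucc).1 < (g i.succ).1 := hg i.castSucc_lt_succ
          simp at ih ⊢; omega
      exact (nd_le _).trans hi
    have hmono : Monotone (fun i : Fin (N+1) => (g i).1 - nd i) := by
      rw [Fin.monotone_iff_le_succ]
      intro i
      have h1 : (g i.castSucc).1 < (g i.succ).1 := hg i.castSucc_lt_succ
      simp only [Fin.val_succ, Fin.val_castSucc, nd_succ]
      split_ifs <;> omega
    have hlt : ∀ i : Fin (N+1), (g i).1 - nd i < k := by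
      intro i
      have h1 := hmono (Fin.le_last i)
      have h2 := (g (Fin.last N)).2
      have h3 := hge (Fin.last N)
      simp only [Fin.val_last] at h1 h3
      omega
    have he : ∀ i : Fin (N+1), (g i).1 - nd i + nd i = g i := fun i => Nat.sub_add_cancel (hge i)
    refine ⟨⟨fun i => ⟨(g i).1 - nd i, hlt i⟩, (key _).2 ?_⟩, ?_⟩
    · simp only [he]; exact hg
    · apply Subtype.ext; funext i; apply Fin.ext; exact he i

abbrev Wd (k : ℕ) := Lex (ℕ → Fin k)

def sh {k : ℕ} (x : Wd k) : Wd k := toLex (fun i => ofLex x (i+1))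

def hd {k : ℕ} (x : Wd k) : Fin k := ofLex x 0

lemma wd_lt {k : ℕ} (x y : Wd k) : x < y ↔ ∃ i, (∀ j < i, ofLex x j = ofLex y j) ∧ ofLex x i < ofLex y i :=
  Iff.rfl

lemma sh_iter {k : ℕ} (x : Wd k) (i j : ℕ) : ofLex (sh^[i] x) j = ofLex x (j + i) := by
  induction i generalizing x with
  | zero => rfl
  | succ i ih => rw [Function.iterate_succ_apply, ih]; rfl

lemma hd_mono {k : ℕ} {x y : Wd k} (h : x ≤ y) : hd x ≤ hd y := by
  rcases h.eq_or_lt with rfl | h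
  · exact le_rfl
  · obtain ⟨i, h1, h2⟩ := (wd_lt x y).1 h
    rcases Nat.eq_zero_or_pos i with rfl | hi
    · exact h2.le
    · exact (h1 0 hi).le

lemma sh_lt {k : ℕ} {x y : Wd k} (h : x < y) (h0 : hd x = hd y) : sh x < sh y := by
  obtain ⟨i, h1, h2⟩ := (wd_lt x y).1 h
  rcases Nat.eq_zero_or_pos i with rfl | hi
  · exact absurd h0 h2.ne
  · obtain ⟨i, rfl⟩ : ∃ c, i = c + 1 := ⟨i - 1, by omega⟩
    exact (wd_lt _ _).2 ⟨i, fun j hj => h1 (j+1) (by omega), h2⟩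

lemma wd_ext {k : ℕ} {x y : Wd k} (h : ∀ i, hd (sh^[i] x) = hd (sh^[i] y)) : x = y := by
  apply ofLex.injective
  funext i
  have := h i
  unfold hd at this
  rw [sh_iter, sh_iter] at this
  simpa using this

/-- words fixed by the i-th shift -/
def fixEquiv (k i : ℕ) (hi : 0 < i) : {x : Wd k // Function.IsPeriodicPt sh i x} ≃ (Fin i → Fin k) where
  toFun x := fun j => ofLex x.1 j
  invFun u := ⟨toLex (fun j => u ⟨j % i, Nat.mod_lt _ hi⟩), by
    apply ofLex.injective
    funext j
    rw [sh_iter]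
    simp⟩
  left_inv x := by
    apply Subtype.ext
    apply ofLex.injective
    funext j
    change ofLex x.1 (j % i) = ofLex x.1 j
    have h : ∀ q r : ℕ, ofLex x.1 (r + i * q) = ofLex x.1 r := by
      intro q r
      have h2 : Function.IsPeriodicPt sh (i*q) x.1 := x.2.mul_const q
      rw [← sh_iter, h2.eq]
    conv_rhs => rw [← Nat.mod_add_div j i, h]
  right_inv u := by
    funext j
    simp [Nat.mod_eq_of_lt j.2]

lemma finite_per (k i : ℕ) (hi : 0 < i) : Finite {x : Wd k // Function.minimalPeriod sh x = i} := by
  have : Finite {x : Wd k // Function.IsPeriodicPt sh i x} := Finite.of_equiv _ (fixEquiv k i hi).symm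
  refine Finite.of_injective (β := {x : Wd k // Function.IsPeriodicPt sh i x})
    (fun x => ⟨x.1, by have := Function.isPeriodicPt_minimalPeriod sh x.1; rwa [x.2] at this⟩) ?_
  intro x y h
  simpa [Subtype.ext_iff] using h

lemma sum_per (k i : ℕ) (hi : 0 < i) :
    ∑ d ∈ i.divisors, Nat.card {x : Wd k // Function.minimalPeriod sh x = d} = k ^ i := by
  have e1 : Nat.card {x : Wd k // Function.IsPeriodicPt sh i x} = k ^ i := by
    rw [Nat.card_congr (fixEquiv k i hi)]; simp
  rw [← e1]
  have : ∀ d : i.divisors, Finite {x : Wd k // Function.minimalPeriod sh x = d} := fun d =>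
    finite_per k d (Nat.pos_of_mem_divisors d.2)
  rw [← Finset.sum_coe_sort, ← Nat.card_sigma]
  refine Nat.card_congr (Equiv.ofBijective (fun z => ⟨z.2.1, ?_⟩) ⟨?_, ?_⟩)
  · rw [Function.isPeriodicPt_iff_minimalPeriod_dvd, z.2.2]
    exact Nat.dvd_of_mem_divisors z.1.2
  · rintro ⟨⟨d, hd⟩, x, hx⟩ ⟨⟨d', hd'⟩, x', hx'⟩ h
    simp only [Subtype.mk.injEq] at h
    subst h
    simp only at hx hx'
    subst hx
    subst hx'
    rfl
  · rintro ⟨x, hx⟩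
    refine ⟨⟨⟨Function.minimalPeriod sh x, ?_⟩, x, rfl⟩, rfl⟩
    rw [Function.isPeriodicPt_iff_minimalPeriod_dvd] at hx
    exact Nat.mem_divisors.2 ⟨hx, hi.ne'⟩

lemma card_per (k i : ℕ) (hi : 0 < i) :
    (Nat.card {x : Wd k // Function.minimalPeriod sh x = i} : ℤ)
      = ∑ d ∈ i.divisors, ArithmeticFunction.moebius d * (k : ℤ) ^ (i / d) := by
  have h := (ArithmeticFunction.sum_eq_iff_sum_mul_moebius_eq (R := ℤ)
    (f := fun i => (Nat.card {x : Wd k // Function.minimalPeriod sh x = i} : ℤ))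
    (g := fun i => (k:ℤ)^i)).1 (fun m hm => by
      have := sum_per k m hm
      exact_mod_cast this) i hi
  rw [← h]
  exact Nat.sum_divisorsAntidiagonal (fun x y => (((ArithmeticFunction.moebius x : ℤ) : ℤ)) * (k:ℤ)^y)

/-- orbit counting -/
lemma card_inv {Y : Type*} [Fintype Y] (s : Equiv.Perm Y) (i f m : ℕ) (hi : 0 < i)
    (hp : ∀ y, Function.minimalPeriod s y = i) (hc : Fintype.card Y = i * f) :
    Nat.card {c : Y → ℕ // (∀ y, c (s y) = c y) ∧ ∑ y, c y = i * m} = (f + m - 1).choose m := by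
  let G := Subgroup.zpowers s
  let Q := MulAction.orbitRel.Quotient G Y
  let q : Y → Q := fun y => Quotient.mk'' y
  have hq : ∀ y, q (s y) = q y := by
    intro y
    exact Quotient.sound' ⟨⟨s, Subgroup.mem_zpowers s⟩, rfl⟩
  have hfib : ∀ z : Q, (Finset.univ.filter (fun y => q y = z)).card = i := by
    intro z
    induction z using Quotient.inductionOn' with
    | h y =>
    have h1 := MulAction.minimalPeriod_eq_card s y
    have h2 : Function.minimalPeriod (fun x => s • x) y = i := hp y
    rw [← h2, h1, ← Fintype.card_subtype]
    refine Fintype.card_congr (Equiv.subtypeEquivRight fun x => ?_)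
    exact Quotient.eq''
  have hsum : ∀ d : Q → ℕ, ∑ y, d (q y) = i * ∑ z, d z := by
    intro d
    rw [← Finset.sum_fiberwise Finset.univ q, Finset.mul_sum]
    refine Finset.sum_congr rfl fun z _ => ?_
    rw [Finset.sum_congr rfl (g := fun _ => d z) (fun y hy => by rw [(Finset.mem_filter.1 hy).2])]
    rw [Finset.sum_const, hfib, smul_eq_mul]
  have hQ : Fintype.card Q = f := by
    have := hsum (fun _ => 1)
    simp [hc] at this
    rcases this with h | h
    · exact h.symm
    · omega
  have hcard : Nat.card {d : Q → ℕ // ∑ z, d z = m} = (f + m - 1).choose m := by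
    rw [← Nat.card_congr (Sym.equivNatSumOfFintype Q m), Nat.card_eq_fintype_card,
      Sym.card_sym_eq_choose, hQ]
  rw [← hcard]
  symm
  refine Nat.card_congr (Equiv.ofBijective (fun d => ⟨fun y => d.1 (q y), ?_, ?_⟩) ⟨?_, ?_⟩)
  · intro y; simp only [hq]
  · rw [hsum, d.2]
  · rintro ⟨d, hd⟩ ⟨d', hd'⟩ h
    have h := Subtype.mk.inj h
    apply Subtype.ext
    funext z
    induction z using Quotient.inductionOn' with
    | h y => exact congrFun h y
  · rintro ⟨c, hc1, hc2⟩
    have hz : ∀ (g : ℤ) y, c ((s ^ g) y) = c y := by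
      intro g
      induction g using Int.induction_on with
      | zero => simp
      | succ g ih => intro y; rw [zpow_add_one, Equiv.Perm.mul_apply, ih, hc1]
      | pred g ih =>
        intro y
        rw [zpow_sub_one, Equiv.Perm.mul_apply, ih]
        have := hc1 (s⁻¹ y)
        rw [← this]; simp
    have hl : ∀ a b : Y, MulAction.orbitRel G Y a b → c a = c b := by
      rintro a b ⟨⟨g, hg⟩, rfl⟩
      obtain ⟨t, rfl⟩ := Subgroup.mem_zpowers_iff.1 hg
      exact hz t b
    let d : Q → ℕ := fun z => Quotient.liftOn' z c hl
    have hd : ∀ y, d (q y) = c y := fun y => rfl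
    refine ⟨⟨d, ?_⟩, ?_⟩
    · have := hsum d
      simp only [hd, hc2] at this
      exact (Nat.eq_of_mul_eq_mul_left hi this).symm
    · rfl
lemma minPer_eq_card {n : ℕ} (π : Equiv.Perm (Fin n)) (j : Fin n) (hj : π j ≠ j) :
    Function.minimalPeriod π j = (π.cycleOf j).support.card := by
  have h1 := MulAction.minimalPeriod_eq_card π j
  have h2 : Function.minimalPeriod (fun x => π • x) j = Function.minimalPeriod π j := rfl
  rw [← h2, h1, ← Fintype.card_coe]
  refine Fintype.card_congr (Equiv.subtypeEquivRight fun x => ?_)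
  rw [Equiv.Perm.mem_support_cycleOf_iff' hj]
  constructor
  · rintro ⟨⟨g, hg⟩, rfl⟩
    obtain ⟨t, rfl⟩ := Subgroup.mem_zpowers_iff.1 hg
    exact ⟨t, rfl⟩
  · rintro ⟨t, rfl⟩
    exact ⟨⟨π ^ t, t, rfl⟩, rfl⟩

lemma card_minPer {n : ℕ} (π : Equiv.Perm (Fin n)) (i : ℕ) (hi : 1 ≤ i) :
    (Finset.univ.filter (fun j => Function.minimalPeriod π j = i)).card
      = i * Multiset.count i (fullCycleType n π) := by
  unfold fullCycleType
  rw [Multiset.count_add, Multiset.count_replicate]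
  rcases hi.eq_or_lt with rfl | hi
  · have h0 : Multiset.count 1 π.cycleType = 0 := by
      rw [Multiset.count_eq_zero]
      intro h
      exact absurd (Equiv.Perm.one_lt_of_mem_cycleType h) (by simp)
    rw [h0]
    simp only [Function.minimalPeriod_eq_one_iff_isFixedPt, Function.IsFixedPt]
    have : (Finset.univ.filter (fun j => π j = j)) = π.supportᶜ := by
      ext j; simp
    rw [this, Finset.card_compl]; simp
  · rw [if_neg (by omega), add_zero, Equiv.Perm.cycleType_def, Multiset.count_map,
      ← Finset.filter_val, Finset.card_val]
    have hne : ∀ j, Function.minimalPeriod π j = i → π j ≠ j := by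
      intro j h e
      rw [Function.minimalPeriod_eq_one_iff_isFixedPt.2 e] at h; omega
    rw [Finset.card_eq_sum_card_fiberwise (f := fun j => π.cycleOf j)
      (t := π.cycleFactorsFinset.filter (fun a => i = (Finset.card ∘ Equiv.Perm.support) a))]
    · rw [Finset.sum_const_nat (m := i), mul_comm]
      intro c hc
      rw [Finset.mem_filter] at hc
      have hcc : c.support.card = i := hc.2.symm
      rw [← hcc]
      congr 1
      ext j
      simp only [Finset.mem_filter, Finset.mem_univ, true_and]
      constructor
      · rintro ⟨h1, rfl⟩
        rw [hcc] at h1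
        rw [Equiv.Perm.mem_support_cycleOf_iff' (hne j h1)]
      · intro h
        have h1 := Equiv.Perm.cycle_is_cycleOf h hc.1
        have h2 : π j ≠ j := Equiv.Perm.mem_support.1 (Equiv.Perm.mem_cycleFactorsFinset_support_le hc.1 h)
        exact ⟨by rw [minPer_eq_card π j h2, ← h1], h1.symm⟩
    · intro j hj
      simp only [Finset.coe_filter, Finset.mem_univ, true_and, Set.mem_ofPred_eq] at hj ⊢
      have := hne j hj
      refine ⟨Equiv.Perm.cycleOf_mem_cycleFactorsFinset_iff.2 (Equiv.Perm.mem_support.2 this), ?_⟩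
      rw [← hj, minPer_eq_card π j this]; rfl

lemma type_iff {n : ℕ} (π : Equiv.Perm (Fin n)) (m : ℕ → ℕ) 
    (hm0 : m 0 = 0) (hmhigh : ∀ i, n < i → m i = 0) :
    (∀ i, Multiset.count i (fullCycleType n π) = m i) ↔
    ∀ i ∈ Finset.Icc 1 n, (Finset.univ.filter (fun j => Function.minimalPeriod π j = i)).card = i * m i := by
  constructor
  · intro h i hi
    rw [card_minPer π i (Finset.mem_Icc.1 hi).1, h]
  · intro h i
    rcases Nat.eq_zero_or_pos i with rfl | hi
    · rw [hm0, Multiset.count_eq_zero]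
      unfold fullCycleType
      intro h
      rcases Multiset.mem_add.1 h with h | h
      · exact absurd (Equiv.Perm.one_lt_of_mem_cycleType h) (by simp)
      · exact absurd (Multiset.eq_of_mem_replicate h) (by simp)
    · by_cases hin : i ≤ n
      · have := h i (Finset.mem_Icc.2 ⟨hi, hin⟩)
        rw [card_minPer π i hi] at this
        exact Nat.eq_of_mul_eq_mul_left hi this
      · rw [hmhigh i (by omega)]
        have h1 := card_minPer π i hi
        have h2 := Finset.card_le_univ (Finset.univ.filter (fun j => Function.minimalPeriod π j = i))
        rw [h1, Fintype.card_fin] at h2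
        by_contra h3
        have : i * 1 ≤ i * Multiset.count i (fullCycleType n π) := Nat.mul_le_mul_left _ (by omega)
        omega

abbrev YY (n k : ℕ) := {x : Wd k // Function.minimalPeriod sh x ∈ Finset.Icc 1 n}

instance finYY (n k : ℕ) : Finite (YY n k) := by
  have : ∀ i : Finset.Icc 1 n, Finite {x : Wd k // Function.minimalPeriod sh x = i} := fun i =>
    finite_per k i (Finset.mem_Icc.1 i.2).1
  refine Finite.of_injective
    (β := Σ i : Finset.Icc 1 n, {x : Wd k // Function.minimalPeriod sh x = i})
    (fun x => ⟨⟨_, x.2⟩, x.1, rfl⟩) ?_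
  rintro ⟨x, hx⟩ ⟨y, hy⟩ h
  simp only [Sigma.mk.injEq] at h
  obtain ⟨h1, h2⟩ := h
  apply Subtype.ext
  simp only [Subtype.mk.injEq] at h1
  have := (Subtype.heq_iff_coe_eq (by simp [h1])).1 h2
  exact this

instance fintypeYY (n k : ℕ) : Fintype (YY n k) := Fintype.ofFinite _

lemma sh_inj {k : ℕ} {x y : Wd k} (hx : 0 < Function.minimalPeriod sh x)
    (hy : 0 < Function.minimalPeriod sh y) (h : sh x = sh y) : x = y :=
  (Function.isPeriodicPt_minimalPeriod sh x).eq_of_apply_eq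
    (Function.isPeriodicPt_minimalPeriod sh y) hx hy h

lemma minPer_sh {k : ℕ} {x : Wd k} (hx : 0 < Function.minimalPeriod sh x) :
    Function.minimalPeriod sh (sh x) = Function.minimalPeriod sh x :=
  Function.minimalPeriod_apply (Function.minimalPeriod_pos_iff_mem_periodicPts.1 hx)

lemma YY_pos {n k : ℕ} (y : YY n k) : 0 < Function.minimalPeriod sh y.1 := (Finset.mem_Icc.1 y.2).1

def sY {n k : ℕ} (y : YY n k) : YY n k := ⟨sh y.1, by rw [minPer_sh (YY_pos y)]; exact y.2⟩

lemma sY_inj {n k : ℕ} : Function.Injective (sY : YY n k → YY n k) := by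
  intro x y h
  exact Subtype.ext (sh_inj (YY_pos x) (YY_pos y) (congrArg Subtype.val h))

def vv {n k : ℕ} (π : Equiv.Perm (Fin n)) (w : Fin n → Fin k) (j : Fin n) : Wd k :=
  toLex (fun i => w ((π^i) j))

lemma sh_vv {n k : ℕ} (π : Equiv.Perm (Fin n)) (w : Fin n → Fin k) (j : Fin n) :
    sh (vv π w j) = vv π w (π j) := by
  apply ofLex.injective
  funext i
  change w ((π^(i+1)) j) = w ((π^i) (π j))
  rw [pow_succ]; rfl

lemma sh_iter_vv {n k : ℕ} (π : Equiv.Perm (Fin n)) (w : Fin n → Fin k) (p : ℕ) (j : Fin n) :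
    sh^[p] (vv π w j) = vv π w (π^[p] j) := by
  induction p generalizing j with
  | zero => rfl
  | succ p ih => rw [Function.iterate_succ_apply, sh_vv, ih, Function.iterate_succ_apply]

lemma hd_vv {n k : ℕ} (π : Equiv.Perm (Fin n)) (w : Fin n → Fin k) (j : Fin n) :
    hd (vv π w j) = w j := rfl

lemma vv_mono {n k : ℕ} {π : Equiv.Perm (Fin n)} {w : Fin n → Fin k} (h : Compat π w) :
    Monotone (vv π w) := by
  intro i j hij
  rcases hij.eq_or_lt with rfl | hij
  · exact le_rfl
  by_contra hc
  obtain ⟨p, h1, h2⟩ := (wd_lt _ _).1 (not_le.1 hc)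
  have h3 : ∀ q ≤ p, (π^q) i < (π^q) j := by
    intro q
    induction q with
    | zero => intro _; exact hij
    | succ q ih =>
      intro hq
      have h4 := ih (by omega)
      have h5 : w ((π^q) j) = w ((π^q) i) := h1 q (by omega)
      rw [pow_succ', Equiv.Perm.mul_apply, Equiv.Perm.mul_apply]
      exact (h _ _ h4).2 h5.symm
  have h4 : w ((π^p) j) < w ((π^p) i) := h2
  exact absurd (h _ _ (h3 p le_rfl)).1 (not_le.2 h4)

lemma vv_fib {n k : ℕ} {π : Equiv.Perm (Fin n)} {w : Fin n → Fin k} (h : Compat π w)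
    {i j : Fin n} (hij : i < j) (e : vv π w i = vv π w j) : π i < π j := by
  refine (h i j hij).2 ?_
  rw [← hd_vv π w i, e, hd_vv]

lemma vv_fib_iter {n k : ℕ} {π : Equiv.Perm (Fin n)} {w : Fin n → Fin k} (h : Compat π w)
    (p : ℕ) {i j : Fin n} (hij : i < j) (e : vv π w i = vv π w j) : π^[p] i < π^[p] j := by
  induction p generalizing i j with
  | zero => exact hij
  | succ p ih =>
    rw [Function.iterate_succ_apply, Function.iterate_succ_apply]
    exact ih (vv_fib h hij e) (by rw [← sh_vv, ← sh_vv, e])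

lemma minPer_vv {n k : ℕ} {π : Equiv.Perm (Fin n)} {w : Fin n → Fin k} (h : Compat π w) (j : Fin n) :
    Function.minimalPeriod sh (vv π w j) = Function.minimalPeriod π j := by
  rw [Function.minimalPeriod_eq_minimalPeriod_iff]
  intro p
  unfold Function.IsPeriodicPt Function.IsFixedPt
  rw [sh_iter_vv]
  refine ⟨fun e => ?_, fun e => by rw [e]⟩
  set τ := π^[p] with hτ
  have hv : ∀ q, vv π w (τ^[q] j) = vv π w j := by
    intro q
    induction q with
    | zero => rfl
    | succ q ih => rw [Function.iterate_succ_apply', hτ, ← sh_iter_vv, ih, sh_iter_vv, e]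
  rcases lt_trichotomy (τ j) j with hlt | heq | hlt
  · exfalso
    have : StrictAnti (fun q => τ^[q] j) := by
      refine strictAnti_nat_of_succ_lt fun q => ?_
      induction q with
      | zero => exact hlt
      | succ q ih =>
        have := vv_fib_iter h p ih (by rw [hv, hv])
        simpa only [Function.iterate_succ_apply'] using this
    exact not_injective_infinite_finite _ this.injective
  · exact heq
  · exfalso
    have : StrictMono (fun q => τ^[q] j) := by
      refine strictMono_nat_of_lt_succ fun q => ?_
      induction q with
      | zero => exact hlt
      | succ q ih =>
        have := vv_fib_iter h p ih (by rw [hv, hv])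
        simpa only [Function.iterate_succ_apply'] using this
    exact not_injective_infinite_finite _ this.injective

lemma minPer_mem {n : ℕ} (π : Equiv.Perm (Fin n)) (j : Fin n) :
    Function.minimalPeriod π j ∈ Finset.Icc 1 n := by
  have h1 := MulAction.minimalPeriod_eq_card π j
  have h2 : Function.minimalPeriod (fun x => π • x) j = Function.minimalPeriod π j := rfl
  rw [← h2, Finset.mem_Icc]
  constructor
  · rw [h1]
    exact Fintype.card_pos_iff.2 ⟨⟨j, MulAction.mem_orbit_self j⟩⟩
  · rw [h1]
    simpa using Fintype.card_subtype_le (fun x => x ∈ MulAction.orbit (Subgroup.zpowers π) j)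

lemma vv_mem {n k : ℕ} {π : Equiv.Perm (Fin n)} {w : Fin n → Fin k} (h : Compat π w) (j : Fin n) :
    Function.minimalPeriod sh (vv π w j) ∈ Finset.Icc 1 n := by
  rw [minPer_vv h]; exact minPer_mem π j

def cnt {n k : ℕ} (π : Equiv.Perm (Fin n)) (w : Fin n → Fin k) (y : YY n k) : ℕ :=
  (Finset.univ.filter (fun j => vv π w j = y.1)).card

lemma cnt_inv {n k : ℕ} {π : Equiv.Perm (Fin n)} {w : Fin n → Fin k} (h : Compat π w) (y : YY n k) :
    cnt π w (sY y) = cnt π w y := by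
  unfold cnt
  symm
  refine Finset.card_bij (fun j _ => π j) ?_ ?_ ?_
  · intro j hj
    simp only [Finset.mem_filter, Finset.mem_univ, true_and] at hj ⊢
    rw [← sh_vv, hj]; rfl
  · intro a _ b _ h; exact π.injective h
  · intro b hb
    simp only [Finset.mem_filter, Finset.mem_univ, true_and] at hb
    refine ⟨π.symm b, ?_, by simp⟩
    simp only [Finset.mem_filter, Finset.mem_univ, true_and]
    refine sh_inj (Finset.mem_Icc.1 (vv_mem h _)).1 (YY_pos y) ?_
    rw [sh_vv, Equiv.apply_symm_apply, hb]; rfl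

lemma cnt_sum {n k : ℕ} {π : Equiv.Perm (Fin n)} {w : Fin n → Fin k} (h : Compat π w) (i : ℕ) :
    ∑ y ∈ Finset.univ.filter (fun y : YY n k => Function.minimalPeriod sh y.1 = i), cnt π w y
      = (Finset.univ.filter (fun j => Function.minimalPeriod π j = i)).card := by
  rw [Finset.card_eq_sum_card_fiberwise (f := fun j => (⟨vv π w j, vv_mem h j⟩ : YY n k))
    (t := Finset.univ.filter (fun y : YY n k => Function.minimalPeriod sh y.1 = i))]
  · refine Finset.sum_congr rfl fun y hy => ?_
    unfold cnt
    congr 1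
    ext j
    simp only [Finset.mem_filter, Finset.mem_univ, true_and] at hy ⊢
    rw [Subtype.ext_iff]
    constructor
    · intro e
      refine ⟨?_, e⟩
      rw [← hy, ← e, minPer_vv h]
    · exact fun e => e.2
  · intro j hj
    simp only [Finset.coe_filter, Finset.mem_univ, true_and, Set.mem_ofPred_eq] at hj ⊢
    rw [minPer_vv h, hj]

lemma cnt_injective {n k : ℕ} {π π' : Equiv.Perm (Fin n)} {w w' : Fin n → Fin k}
    (h : Compat π w) (h' : Compat π' w') (e : cnt π w = cnt π' w') : π = π' ∧ w = w' := by
  have hV : vv π w = vv π' w' := by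
    have h1 : Finset.univ.val.map (vv π w) = Finset.univ.val.map (vv π' w') := by
      ext x
      rw [Multiset.count_map, Multiset.count_map, ← Finset.filter_val, ← Finset.filter_val,
        Finset.card_val, Finset.card_val]
      by_cases hx : Function.minimalPeriod sh x ∈ Finset.Icc 1 n
      · have := congrFun e ⟨x, hx⟩
        unfold cnt at this
        simpa only [eq_comm] using this
      · rw [Finset.filter_false_of_mem, Finset.filter_false_of_mem]
        · rintro j _ rfl; exact hx (vv_mem h' j)
        · rintro j _ rfl; exact hx (vv_mem h j)
    rw [Fin.univ_val_map, Fin.univ_val_map, Multiset.coe_eq_coe] at h1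
    exact List.ofFn_injective
      (h1.eq_of_sortedLE (vv_mono h).sortedLE_ofFn (vv_mono h').sortedLE_ofFn)
  have hw : w = w' := by
    funext j
    rw [← hd_vv π w j, hV, hd_vv]
  refine ⟨?_, hw⟩
  set ρ : Equiv.Perm (Fin n) := π.symm.trans π' with hρ
  have hVρ : ∀ a, vv π w (ρ a) = vv π w a := by
    intro a
    have : ρ a = π' (π.symm a) := rfl
    rw [this, hV, ← sh_vv, ← hV, sh_vv]; simp
  have hm : StrictMono ρ := by
    intro a b hab
    rcases (vv_mono h hab.le).lt_or_eq with hlt | heq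
    · rw [← hVρ a, ← hVρ b] at hlt
      exact (vv_mono h).reflect_lt hlt
    · have h1 : vv π w (π.symm a) = vv π w (π.symm b) := by
        refine sh_inj (Finset.mem_Icc.1 (vv_mem h _)).1 (Finset.mem_Icc.1 (vv_mem h _)).1 ?_
        rw [sh_vv, sh_vv]; simpa using heq
      have h2 : π.symm a < π.symm b := by
        by_contra hc
        rcases (not_lt.1 hc).lt_or_eq with hc | hc
        · have := vv_fib h hc h1.symm
          simp at this
          exact absurd hab (not_lt.2 this.le)
        · exact hab.ne (π.symm.injective hc.symm)
      rw [hV] at h1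
      exact vv_fib h' h2 h1
  have hid : (ρ : Fin n → Fin n) = id := by
    have := Subsingleton.elim (hm.orderIsoOfSurjective _ ρ.surjective) (OrderIso.refl (Fin n))
    funext a
    exact congrArg (fun f : Fin n ≃o Fin n => f a) this
  ext a
  have := congrFun hid (π a)
  simp [hρ] at this
  rw [this]

lemma cnt_surj {n k : ℕ} (m : ℕ → ℕ) (hsum : ∑ i ∈ Finset.Icc 1 n, i * m i = n)
    (c : YY n k → ℕ) (hinv : ∀ y, c (sY y) = c y)
    (hc : ∀ i ∈ Finset.Icc 1 n,
      ∑ y ∈ Finset.univ.filter (fun y : YY n k => Function.minimalPeriod sh y.1 = i), c y = i * m i) :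
    ∃ (π : Equiv.Perm (Fin n)) (w : Fin n → Fin k), Compat π w ∧ cnt π w = c := by
  have htot : ∑ y, c y = n := by
    rw [← Finset.sum_fiberwise_of_maps_to (s := Finset.univ) (t := Finset.Icc 1 n)
      (g := fun y : YY n k => Function.minimalPeriod sh y.1) (fun y _ => y.2)]
    rw [Finset.sum_congr rfl hc, hsum]
  let T := Σ y : YY n k, Fin (c y)
  have hT : Fintype.card T = n := by simp [T, htot]
  let φ : T → Lex (Wd k × ℕ) := fun t => toLex (t.1.1, t.2.1)
  have hφ : Function.Injective φ := by
    rintro ⟨y, a⟩ ⟨y', a'⟩ h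
    have h := Prod.mk.inj (toLex.injective h)
    obtain ⟨h1, h2⟩ := h
    have h1 : y = y' := Subtype.ext h1
    subst h1
    have h2 : a = a' := Fin.ext h2
    rw [h2]
  let e0 : Fin n ≃ T := (Fintype.equivFinOfCardEq hT).symm
  let e : Fin n ≃ T := (Tuple.sort (φ ∘ e0)).trans e0
  have he : StrictMono (fun j => φ (e j)) := by
    have h1 : Monotone (fun j => φ (e j)) := Tuple.monotone_sort (φ ∘ e0)
    exact h1.strictMono_of_injective (hφ.comp e.injective)
  let P0 : T → T := fun t => ⟨sY t.1, Fin.cast (hinv t.1).symm t.2⟩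
  have hP0 : Function.Injective P0 := by
    intro t t' h
    have h := congrArg φ h
    have h := Prod.mk.inj (toLex.injective h)
    obtain ⟨h1, h2⟩ := h
    apply hφ
    have h3 : t.1.1 = t'.1.1 := sh_inj (YY_pos _) (YY_pos _) h1
    have h4 : t.2.1 = t'.2.1 := h2
    simp only [φ, h3, h4]
  let P : Equiv.Perm T := Equiv.ofBijective P0 (Finite.injective_iff_bijective.1 hP0)
  let π : Equiv.Perm (Fin n) := (e.trans P).trans e.symm
  have heπ : ∀ j, e (π j) = P0 (e j) := by
    intro j; simp [π, P]
  let w : Fin n → Fin k := fun j => hd (e j).1.1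
  have hsh : ∀ j, (e (π j)).1.1 = sh (e j).1.1 := by
    intro j; rw [heπ]; rfl
  have hV : ∀ j, vv π w j = (e j).1.1 := by
    intro j
    apply wd_ext
    intro i
    rw [sh_iter_vv, hd_vv]
    have : (e (π^[i] j)).1.1 = sh^[i] (e j).1.1 := by
      induction i with
      | zero => rfl
      | succ i ih => rw [Function.iterate_succ_apply', hsh, ih, Function.iterate_succ_apply']
    rw [← this]
  refine ⟨π, w, ?_, ?_⟩
  · intro i j hij
    have h1 : toLex ((e i).1.1, (e i).2.1) < toLex ((e j).1.1, (e j).2.1) := he hij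
    have h2 : φ (P0 (e i)) < φ (P0 (e j)) → π i < π j := by
      intro h
      rw [← heπ, ← heπ] at h
      exact he.lt_iff_lt.1 h
    rw [Prod.Lex.toLex_lt_toLex] at h1
    rcases h1 with h1 | ⟨h1, h3⟩
    · refine ⟨hd_mono h1.le, fun e0 => h2 ?_⟩
      exact Prod.Lex.toLex_lt_toLex.2 (Or.inl (sh_lt h1 e0))
    · simp only at h1 h3
      refine ⟨(congrArg hd h1).le, fun e0 => h2 ?_⟩
      exact Prod.Lex.toLex_lt_toLex.2 (Or.inr ⟨congrArg sh h1, h3⟩)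
  · funext y
    unfold cnt
    simp only [hV]
    rw [← Fintype.card_fin (c y), ← Finset.card_univ (α := Fin (c y))]
    symm
    refine Finset.card_bij (fun a _ => e.symm ⟨y, a⟩) ?_ ?_ ?_
    · intro a _; simp
    · intro a _ b _ h
      exact eq_of_heq (Sigma.mk.inj (e.symm.injective h)).2
    · intro b hb
      simp only [Finset.mem_filter, Finset.mem_univ, true_and] at hb
      have hb : (e b).1 = y := Subtype.ext hb
      subst hb
      exact ⟨(e b).2, Finset.mem_univ _, by simp⟩

def sI {k : ℕ} {i : ℕ} (hi : 0 < i) (x : {x : Wd k // Function.minimalPeriod sh x = i}) :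
    {x : Wd k // Function.minimalPeriod sh x = i} :=
  ⟨sh x.1, by rw [minPer_sh (by rw [x.2]; exact hi)]; exact x.2⟩

lemma card_I {k i : ℕ} (hi : 0 < i) (f m : ℕ)
    [Fintype {x : Wd k // Function.minimalPeriod sh x = i}]
    (hf : (i : ℤ) * (f : ℤ)
        = ∑ d ∈ i.divisors, ArithmeticFunction.moebius d * (k : ℤ) ^ (i / d)) :
    Nat.card {c : {x : Wd k // Function.minimalPeriod sh x = i} → ℕ //
      (∀ x, c (sI hi x) = c x) ∧ ∑ x, c x = i * m} = (f + m - 1).choose m := by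
  have hinj : Function.Injective (sI (k := k) hi) := by
    intro x y h
    exact Subtype.ext (sh_inj (by rw [x.2]; exact hi) (by rw [y.2]; exact hi) (congrArg Subtype.val h))
  let s : Equiv.Perm {x : Wd k // Function.minimalPeriod sh x = i} :=
    Equiv.ofBijective _ (Finite.injective_iff_bijective.1 hinj)
  have hs : ∀ x, s x = sI hi x := fun x => rfl
  refine card_inv s i f m hi ?_ ?_
  · intro x
    conv_rhs => rw [← x.2]
    rw [Function.minimalPeriod_eq_minimalPeriod_iff]
    intro p
    have : ∀ p, (s^[p] x).1 = sh^[p] x.1 := by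
      intro p
      induction p with
      | zero => rfl
      | succ p ih => rw [Function.iterate_succ_apply', Function.iterate_succ_apply', ← ih]; rfl
    unfold Function.IsPeriodicPt Function.IsFixedPt
    rw [Subtype.ext_iff, this]
  · have := card_per k i hi
    rw [← hf, Nat.card_eq_fintype_card] at this
    exact_mod_cast this

lemma card_B (n k : ℕ) (m : ℕ → ℕ) (f : ℕ → ℕ)
    (hf : ∀ i : ℕ, 1 ≤ i → 
      (i : ℤ) * (f i : ℤ)
        = ∑ d ∈ i.divisors, ArithmeticFunction.moebius d * (k : ℤ) ^ (i / d)) :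
    Nat.card {c : YY n k → ℕ // (∀ y, c (sY y) = c y) ∧ ∀ i ∈ Finset.Icc 1 n,
      ∑ y ∈ Finset.univ.filter (fun y : YY n k => Function.minimalPeriod sh y.1 = i), c y = i * m i}
    = ∏ i ∈ Finset.Icc 1 n, (f i + m i - 1).choose (m i) := by
  have hpos : ∀ i : Finset.Icc 1 n, 0 < i.1 := fun i => (Finset.mem_Icc.1 i.2).1
  let _ : ∀ i : Finset.Icc 1 n, Fintype {x : Wd k // Function.minimalPeriod sh x = i.1} := fun i =>
    @Fintype.ofFinite _ (finite_per k i.1 (hpos i))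
  have h1 : ∏ i ∈ Finset.Icc 1 n, (f i + m i - 1).choose (m i)
      = Nat.card (∀ i : Finset.Icc 1 n, {c : {x : Wd k // Function.minimalPeriod sh x = i.1} → ℕ //
        (∀ x, c (sI (hpos i) x) = c x) ∧ ∑ x, c x = i.1 * m i.1}) := by
    rw [Nat.card_pi, ← Finset.prod_coe_sort]
    refine Finset.prod_congr rfl fun i _ => ?_
    rw [card_I (hpos i) (f i.1) (m i.1) (hf i.1 (hpos i))]
  rw [h1]
  have hsumc : ∀ (c : YY n k → ℕ) (i : Finset.Icc 1 n),
      ∑ y ∈ Finset.univ.filter (fun y : YY n k => Function.minimalPeriod sh y.1 = i.1), c y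
      = ∑ x : {x : Wd k // Function.minimalPeriod sh x = i.1}, c ⟨x.1, by rw [x.2]; exact i.2⟩ := by
    intro c i
    symm
    refine Finset.sum_bij (fun x _ => ⟨x.1, by rw [x.2]; exact i.2⟩) ?_ ?_ ?_ ?_
    · intro x _; simp [x.2]
    · intro x _ y _ h
      exact Subtype.ext (Subtype.mk.inj h)
    · intro y hy
      simp only [Finset.mem_filter, Finset.mem_univ, true_and] at hy
      exact ⟨⟨y.1, hy⟩, Finset.mem_univ _, rfl⟩
    · intro x _; rfl
  refine Nat.card_congr (Equiv.ofBijective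
    (fun c => fun i => ⟨fun x => c.1 ⟨x.1, by rw [x.2]; exact i.2⟩, ?_, ?_⟩) ⟨?_, ?_⟩)
  · intro x
    exact c.2.1 ⟨x.1, by rw [x.2]; exact i.2⟩
  · rw [← hsumc]; exact c.2.2 i.1 i.2
  · rintro ⟨c, hc⟩ ⟨c', hc'⟩ h
    apply Subtype.ext
    funext y
    have h2 := Subtype.mk.inj (congrFun h ⟨_, y.2⟩)
    exact congrFun h2 ⟨y.1, rfl⟩
  · intro g
    let c : YY n k → ℕ := fun y => (g ⟨_, y.2⟩).1 ⟨y.1, rfl⟩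
    have hcg : ∀ (i : Finset.Icc 1 n) (x : {x : Wd k // Function.minimalPeriod sh x = i.1}),
        c ⟨x.1, by rw [x.2]; exact i.2⟩ = (g i).1 x := by
      rintro ⟨i, hi⟩ ⟨x, hx⟩
      simp only at hx
      subst hx
      rfl
    refine ⟨⟨c, ?_, ?_⟩, ?_⟩
    · intro y
      have h1 := hcg ⟨_, y.2⟩ ⟨y.1, rfl⟩
      have h2 := hcg ⟨_, y.2⟩ (sI (hpos ⟨_, y.2⟩) ⟨y.1, rfl⟩)
      exact h2.trans (((g ⟨_, y.2⟩).2.1 _).trans h1.symm)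
    · intro i hi
      rw [hsumc c ⟨i, hi⟩]
      simp only [hcg ⟨i, hi⟩]
      exact (g ⟨i, hi⟩).2.2
    · funext i
      apply Subtype.ext
      funext x
      exact hcg i x

lemma main_count_s18 (n k : ℕ) (hn : 1 ≤ n) (m : ℕ → ℕ)
    (hm0 : m 0 = 0) (hmhigh : ∀ i, n < i → m i = 0)
    (hsum : ∑ i ∈ Finset.Icc 1 n, i * m i = n) (f : ℕ → ℕ)
    (hf : ∀ i : ℕ, 1 ≤ i → 
      (i : ℤ) * (f i : ℤ)
        = ∑ d ∈ i.divisors, ArithmeticFunction.moebius d * (k : ℤ) ^ (i / d)) :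
    ∑ π ∈ (Finset.univ.filter fun π : Equiv.Perm (Fin n) =>
        ∀ i, Multiset.count i (fullCycleType n π) = m i), (n + k - 1 - des n π).choose n
    = ∏ i ∈ Finset.Icc 1 n, (f i + m i - 1).choose (m i) := by
  rw [← card_B n k m f hf, ← Finset.sum_coe_sort]
  simp only [← card_compat n k hn]
  rw [← Nat.card_sigma]
  refine Nat.card_congr (Equiv.ofBijective (fun z => ⟨cnt z.1.1 z.2.1, cnt_inv z.2.2, ?_⟩) ⟨?_, ?_⟩)
  · have h1 := (Finset.mem_filter.1 z.1.2).2
    rw [type_iff _ _ hm0 hmhigh] at h1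
    intro i hi
    rw [cnt_sum z.2.2, h1 i hi]
  · rintro ⟨⟨π, hπ⟩, w, hw⟩ ⟨⟨π', hπ'⟩, w', hw'⟩ h
    obtain ⟨rfl, rfl⟩ := cnt_injective hw hw' (Subtype.mk.inj h)
    rfl
  · rintro ⟨c, hc1, hc2⟩
    obtain ⟨π, w, h1, h2⟩ := cnt_surj m hsum c hc1 hc2
    refine ⟨⟨⟨π, ?_⟩, w, h1⟩, Subtype.ext h2⟩
    rw [Finset.mem_filter, type_iff _ _ hm0 hmhigh]
    refine ⟨Finset.mem_univ _, fun i hi => ?_⟩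
    rw [← cnt_sum h1, h2, hc2 i hi]

theorem stmt18 (n : ℕ) (hn : 1 ≤ n) (m : ℕ → ℕ)
    (hm0 : m 0 = 0) (hmhigh : ∀ i, n < i → m i = 0)
    (hsum : ∑ i ∈ Finset.Icc 1 n, i * m i = n)
    (f : ℕ → ℕ → ℕ)
    (hf : ∀ i : ℕ, 1 ≤ i → ∀ k : ℕ,
      (i : ℤ) * (f i k : ℤ)
        = ∑ d ∈ i.divisors, ArithmeticFunction.moebius d * (k : ℤ) ^ (i / d)) :
    (∑ π ∈ (Finset.univ.filter fun π : Equiv.Perm (Fin n) =>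
        ∀ i, Multiset.count i (fullCycleType n π) = m i),
        (PowerSeries.X : PowerSeries ℚ) ^ (des n π + 1))
      = (1 - PowerSeries.X) ^ (n + 1)
          * PowerSeries.mk (fun k =>
              ∏ i ∈ (Finset.Icc 1 n).filter (fun i => 1 ≤ m i),
                ((f i k + m i - 1).choose (m i) : ℚ)) := by
  have h : ∀ k, ∏ i ∈ (Finset.Icc 1 n).filter (fun i => 1 ≤ m i),
                ((f i k + m i - 1).choose (m i) : ℚ)
      = ∑ π ∈ (Finset.univ.filter fun π : Equiv.Perm (Fin n) =>
        ∀ i, Multiset.count i (fullCycleType n π) = m i), ((n + k - 1 - des n π).choose n : ℚ) := by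
    intro k
    have h1 := main_count_s18 n k hn m hm0 hmhigh hsum (fun i => f i k) (fun i hi => hf i hi k)
    have h2 : ∏ i ∈ (Finset.Icc 1 n).filter (fun i => 1 ≤ m i), (f i k + m i - 1).choose (m i)
        = ∏ i ∈ Finset.Icc 1 n, (f i k + m i - 1).choose (m i) := by
      refine Finset.prod_filter_of_ne fun i _ hne => ?_
      by_contra h0
      have h0 : m i = 0 := by omega
      rw [h0] at hne
      exact hne (Nat.choose_zero_right _)
    rw [← h2] at h1
    exact_mod_cast h1.symm
  have h3 : PowerSeries.mk (fun k => ∑ π ∈ (Finset.univ.filter fun π : Equiv.Perm (Fin n) =>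
        ∀ i, Multiset.count i (fullCycleType n π) = m i), ((n + k - 1 - des n π).choose n : ℚ))
      = ∑ π ∈ (Finset.univ.filter fun π : Equiv.Perm (Fin n) =>
        ∀ i, Multiset.count i (fullCycleType n π) = m i),
          PowerSeries.mk (fun k => ((n + k - 1 - des n π).choose n : ℚ)) := by
    ext k
    simp [map_sum]
  simp only [h]
  rw [h3, Finset.mul_sum]
  exact Finset.sum_congr rfl fun π _ => ps_aux n (des n π) hn

end
end
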